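/- arXiv:2603.12497 — 2 statements merged into one kernel-verified Lean document; each statement's English description precedes it below -/
import Mathlib

section
/- Let 𝒪_{jk}(x,t) := δ_{jk} H_α(x,t) − ∂_j ∂_k Δ^{−1} H_α(x,t) be the 2D nonlocal Oseen kernel, where H_α is the fractional heat kernel with α ∈ (1/2,1). Then for every integer k ≥ 0 and every real β with β + k > −2 there is C(k,β,α) with |∇_x^k (−Δ)^{β/2} 𝒪(x,t)| ≤ C (t^{1/(2α)} + |x|)^{−2−β−k} for all x ∈ ℝ², t > 0. -/
open MeasureTheory
open scoped FourierTransform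

noncomputable section

abbrev E2 := EuclideanSpace ℝ (Fin 2)

/-- The Fourier symbol of the 2D nonlocal Oseen kernel:
`(δ_{ab} − ξ_aξ_b/|ξ|²) e^{−t|ξ|^{2α}}`. -/
def oseenSym (α : ℝ) (a b : Fin 2) (t : ℝ) (ξ : E2) : ℂ :=
  ((((if a = b then (1:ℝ) else 0) - ξ a * ξ b / ‖ξ‖ ^ 2) : ℝ) : ℂ) *
    Complex.exp (-((t * ‖ξ‖ ^ (2 * α) : ℝ) : ℂ))

/-- `(−Δ)^{β/2} 𝒪_{ab}(·,t) = 𝓕⁻¹(|ξ|^β (δ_{ab} − ξ_aξ_b/|ξ|²) e^{−t|ξ|^{2α}})`. -/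
def oseenFrac (α β : ℝ) (a b : Fin 2) (t : ℝ) : E2 → ℂ :=
  𝓕⁻ (fun ξ : E2 => ((‖ξ‖ ^ β : ℝ) : ℂ) * oseenSym α a b t ξ)

/-!
The symbol of `(-Δ)^{β/2} 𝒪` is `e^{-t|ξ|ᵖ} Q(ξ)` with `p = 2α` and `Q` homogeneous of degree `β`;
taking `k` derivatives merely replaces `Q` by a tensor-valued symbol of degree `β + k`. So let `Q`
be homogeneous of degree `γ > -d` on a `d`-dimensional space. Rescaling the kernel by `t^{1/p}` or
by `|x|`, whichever is larger, reduces the decay bound to two cases. If `t = 1`, the kernel is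
bounded by the `L¹` norm of its symbol. If `|x| = 1`, a bound uniform in `t` is needed. There the
frequencies `|ξ| ≲ 1` contribute at most `∫_{|ξ| ≤ 2} |ξ|^γ`, which is finite because `γ > -d`, and
at the frequencies `|ξ| ≳ 1` integrating by parts `N > γ + d` times leaves an integrable symbol of
size `|ξ|^{γ - N}`. These bounds do not depend on `t` because `e^{-t|ξ|ᵖ}` satisfies Mikhlin's
estimates `|∇ⁿ e^{-t|ξ|ᵖ}| ≤ Cₙ |ξ|^{-n}` uniformly in `t`; its decay, which is not uniform in
`t`, serves only to justify the integrations by parts.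
-/

open Set Metric Module
open scoped ContDiff

section Symbols

variable {ι V F : Type*} [NormedAddCommGroup V] [NormedSpace ℝ V]
  [NormedAddCommGroup F] [NormedSpace ℝ F] {γ δ : ℝ}

/-- A multiplier that is smooth away from the origin and positively homogeneous of degree `γ`.
Its value at the origin is irrelevant and left unconstrained. -/
structure IsHomogeneousSymbol (γ : ℝ) (m : V → F) : Prop where
  contDiffOn : ContDiffOn ℝ ∞ m {0}ᶜ
  map_smul : ∀ r : ℝ, 0 < r → ∀ ξ : V, ξ ≠ 0 → m (r • ξ) = r ^ γ • m ξ

/-- A family of multipliers satisfying the Mikhlin-type bounds `|∇ⁿ m| ≤ Cₙ |ξ|^(γ - n)` away from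
the origin, with constants that are uniform over the parameters in `S`. -/
structure IsSymbolFamily (S : Set ι) (γ : ℝ) (m : ι → V → F) : Prop where
  contDiffOn : ∀ i ∈ S, ContDiffOn ℝ ∞ (m i) {0}ᶜ
  exists_bound : ∀ n : ℕ, ∃ C, ∀ i ∈ S, ∀ ξ : V, ξ ≠ 0 →
    ‖iteratedFDeriv ℝ n (m i) ξ‖ ≤ C * ‖ξ‖ ^ (γ - n)

namespace IsHomogeneousSymbol

variable {m : V → F}

theorem norm_rpow {V : Type*} [NormedAddCommGroup V] [InnerProductSpace ℝ V] (γ : ℝ) :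
    IsHomogeneousSymbol γ (fun ξ : V => ‖ξ‖ ^ γ) where
  contDiffOn _ hξ :=
    ((contDiffAt_norm ℝ hξ).rpow_const_of_ne (norm_ne_zero_iff.mpr hξ)).contDiffWithinAt
  map_smul r hr ξ _ := by
    rw [norm_smul, Real.norm_of_nonneg hr.le, Real.mul_rpow hr.le (norm_nonneg ξ), smul_eq_mul]

theorem const (c : F) : IsHomogeneousSymbol 0 (fun _ : V => c) where
  contDiffOn := contDiffOn_const
  map_smul r _ ξ _ := by simp

theorem clm (L : V →L[ℝ] F) : IsHomogeneousSymbol 1 L where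
  contDiffOn := L.contDiff.contDiffOn
  map_smul r _ ξ _ := by simp

theorem sub {m₁ m₂ : V → F} (h₁ : IsHomogeneousSymbol γ m₁) (h₂ : IsHomogeneousSymbol γ m₂) :
    IsHomogeneousSymbol γ (fun ξ => m₁ ξ - m₂ ξ) where
  contDiffOn := h₁.contDiffOn.sub h₂.contDiffOn
  map_smul r hr ξ hξ := by rw [h₁.map_smul r hr ξ hξ, h₂.map_smul r hr ξ hξ, smul_sub]

theorem smul {c : V → ℝ} (hc : IsHomogeneousSymbol γ c) (hm : IsHomogeneousSymbol δ m) :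
    IsHomogeneousSymbol (γ + δ) (fun ξ => c ξ • m ξ) where
  contDiffOn := hc.contDiffOn.smul hm.contDiffOn
  map_smul r hr ξ hξ := by
    rw [hc.map_smul r hr ξ hξ, hm.map_smul r hr ξ hξ, Real.rpow_add hr, smul_smul, smul_eq_mul,
      smul_smul, mul_right_comm]

theorem clm_comp {G : Type*} [NormedAddCommGroup G] [NormedSpace ℝ G]
    (hm : IsHomogeneousSymbol γ m) (L : F →L[ℝ] G) :
    IsHomogeneousSymbol γ (fun ξ => L (m ξ)) where
  contDiffOn := L.contDiff.comp_contDiffOn hm.contDiffOn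
  map_smul r hr ξ hξ := by rw [hm.map_smul r hr ξ hξ, _root_.map_smul]

protected theorem fderiv (hm : IsHomogeneousSymbol γ m) :
    IsHomogeneousSymbol (γ - 1) (fderiv ℝ m) where
  contDiffOn := hm.contDiffOn.fderiv_of_isOpen isOpen_compl_singleton (by simp)
  map_smul r hr ξ hξ := by
    have heq : (m <| r • ·) =ᶠ[nhds ξ] r ^ γ • m := by
      filter_upwards [isOpen_compl_singleton.mem_nhds hξ] with η hη using hm.map_smul r hr η hη
    have hderiv : r • fderiv ℝ m (r • ξ) = r ^ γ • fderiv ℝ m ξ := by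
      rw [← fderiv_comp_smul, heq.fderiv_eq, fderiv_const_smul_field, Pi.smul_apply]
    rw [Real.rpow_sub_one hr.ne', div_eq_inv_mul, mul_smul, ← hderiv, inv_smul_smul₀ hr.ne']

protected theorem iteratedFDeriv (hm : IsHomogeneousSymbol γ m) (n : ℕ) :
    IsHomogeneousSymbol (γ - n) (iteratedFDeriv ℝ n m) := by
  induction n with
  | zero =>
    rw [Nat.cast_zero, sub_zero, iteratedFDeriv_zero_eq_comp]
    exact hm.clm_comp
      (continuousMultilinearCurryFin0 ℝ V F).symm.toContinuousLinearEquiv.toContinuousLinearMap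
  | succ n ih =>
    rw [Nat.cast_succ, ← sub_sub, iteratedFDeriv_succ_eq_comp_left]
    exact ih.fderiv.clm_comp (continuousMultilinearCurryLeftEquiv ℝ
      (fun _ : Fin (n + 1) => V) F).symm.toContinuousLinearEquiv.toContinuousLinearMap

theorem exists_norm_le [FiniteDimensional ℝ V] (hm : IsHomogeneousSymbol γ m) :
    ∃ C, ∀ ξ : V, ξ ≠ 0 → ‖m ξ‖ ≤ C * ‖ξ‖ ^ γ := by
  have := FiniteDimensional.proper_real V
  obtain ⟨C, hC⟩ := (isCompact_sphere (0 : V) 1).exists_bound_of_continuousOn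
    (hm.contDiffOn.continuousOn.mono fun ξ hξ => ne_of_mem_sphere hξ one_ne_zero)
  refine ⟨C, fun ξ hξ => ?_⟩
  have hpos : 0 < ‖ξ‖ := norm_pos_iff.mpr hξ
  have hunit : ‖ξ‖⁻¹ • ξ ∈ sphere (0 : V) 1 := by
    simp [norm_smul, hpos.ne']
  calc ‖m ξ‖ = ‖m (‖ξ‖ • ‖ξ‖⁻¹ • ξ)‖ := by rw [smul_inv_smul₀ hpos.ne']
    _ = ‖m (‖ξ‖⁻¹ • ξ)‖ * ‖ξ‖ ^ γ := by
      rw [hm.map_smul _ hpos _ (ne_of_mem_sphere hunit one_ne_zero), norm_smul,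
        Real.norm_of_nonneg (by positivity), mul_comm]
    _ ≤ C * ‖ξ‖ ^ γ := by gcongr; exact hC _ hunit

theorem isSymbolFamily [FiniteDimensional ℝ V] (hm : IsHomogeneousSymbol γ m) (S : Set ι) :
    IsSymbolFamily S γ (fun _ => m) where
  contDiffOn _ _ := hm.contDiffOn
  exists_bound n := (hm.iteratedFDeriv n).exists_norm_le.imp fun _ hC _ _ => hC

end IsHomogeneousSymbol

namespace IsSymbolFamily

variable {S : Set ι}

theorem sub {m₁ m₂ : ι → V → F} (h₁ : IsSymbolFamily S γ m₁) (h₂ : IsSymbolFamily S γ m₂) :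
    IsSymbolFamily S γ (fun i ξ => m₁ i ξ - m₂ i ξ) where
  contDiffOn i hi := (h₁.contDiffOn i hi).sub (h₂.contDiffOn i hi)
  exists_bound n := by
    obtain ⟨A, hA⟩ := h₁.exists_bound n
    obtain ⟨B, hB⟩ := h₂.exists_bound n
    refine ⟨A + B, fun i hi ξ hξ => ?_⟩
    have hnhds : ({0}ᶜ : Set V) ∈ nhds ξ := isOpen_compl_singleton.mem_nhds hξ
    have hsub : iteratedFDeriv ℝ n (fun ξ => m₁ i ξ - m₂ i ξ) ξ =
        iteratedFDeriv ℝ n (m₁ i) ξ - iteratedFDeriv ℝ n (m₂ i) ξ :=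
      iteratedFDeriv_sub_apply
        (((h₁.contDiffOn i hi).contDiffAt hnhds).of_le (mod_cast le_top))
        (((h₂.contDiffOn i hi).contDiffAt hnhds).of_le (mod_cast le_top))
    rw [hsub, add_mul]
    exact (norm_sub_le _ _).trans (add_le_add (hA i hi ξ hξ) (hB i hi ξ hξ))

theorem smul {c : ι → V → ℝ} {m : ι → V → F} (hc : IsSymbolFamily S γ c)
    (hm : IsSymbolFamily S δ m) : IsSymbolFamily S (γ + δ) (fun i ξ => c i ξ • m i ξ) where
  contDiffOn i hi := (hc.contDiffOn i hi).smul (hm.contDiffOn i hi)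
  exists_bound n := by
    choose A hA using hc.exists_bound
    choose B hB using hm.exists_bound
    refine ⟨∑ j ∈ Finset.range (n + 1), n.choose j * (A j * B (n - j)), fun i hi ξ hξ => ?_⟩
    have leibniz := norm_iteratedFDerivWithin_smul_le (hc.contDiffOn i hi) (hm.contDiffOn i hi)
      isOpen_compl_singleton.uniqueDiffOn hξ (n := n) (mod_cast le_top)
    simp only [iteratedFDerivWithin_of_isOpen _ isOpen_compl_singleton hξ] at leibniz
    refine leibniz.trans ?_
    rw [Finset.sum_mul]
    refine Finset.sum_le_sum fun j hj => ?_
    have hexp : ‖ξ‖ ^ (γ + δ - n) = ‖ξ‖ ^ (γ - j) * ‖ξ‖ ^ (δ - (n - j : ℕ)) := by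
      rw [← Real.rpow_add (norm_pos_iff.mpr hξ), Nat.cast_sub (Finset.mem_range_succ_iff.mp hj)]
      congr 1
      ring
    calc n.choose j * ‖iteratedFDeriv ℝ j (c i) ξ‖ * ‖iteratedFDeriv ℝ (n - j) (m i) ξ‖
        = n.choose j * (‖iteratedFDeriv ℝ j (c i) ξ‖ * ‖iteratedFDeriv ℝ (n - j) (m i) ξ‖) :=
          mul_assoc _ _ _
      _ ≤ n.choose j * ((A j * ‖ξ‖ ^ (γ - j)) * (B (n - j) * ‖ξ‖ ^ (δ - (n - j : ℕ)))) := by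
          gcongr
          · exact (norm_nonneg _).trans (hA j i hi ξ hξ)
          · exact hA j i hi ξ hξ
          · exact hB (n - j) i hi ξ hξ
      _ = n.choose j * (A j * B (n - j)) * ‖ξ‖ ^ (γ + δ - n) := by rw [hexp]; ring

theorem of_hasCompactSupport {f : V → F} (hf : ContDiff ℝ ∞ f) (hsupp : HasCompactSupport f)
    (S : Set ι) : IsSymbolFamily S 0 (fun _ => f) where
  contDiffOn _ _ := hf.contDiffOn
  exists_bound n := by
    have hcont : Continuous fun ξ => ‖ξ‖ ^ n * ‖iteratedFDeriv ℝ n f ξ‖ :=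
      (continuous_norm.pow n).mul (hf.continuous_iteratedFDeriv (mod_cast le_top)).norm
    obtain ⟨C, hC⟩ :=
      (hsupp.iteratedFDeriv n).norm.mul_left.exists_bound_of_continuous hcont
    refine ⟨C, fun _ _ ξ hξ => ?_⟩
    have hpos : 0 < ‖ξ‖ := norm_pos_iff.mpr hξ
    rw [zero_sub, Real.rpow_neg hpos.le, Real.rpow_natCast, ← div_eq_mul_inv,
      le_div_iff₀' (by positivity)]
    exact (le_abs_self _).trans (hC ξ)

end IsSymbolFamily

end Symbols

section HeatSymbol

variable {V : Type*} [NormedAddCommGroup V] [InnerProductSpace ℝ V] {p t : ℝ}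

/-- The Fourier symbol `e^{-t|ξ|ᵖ}` of the fractional heat semigroup `e^{-t(-Δ)^{p/2}}`, in the
normalisation of the frequency variable in which `-Δ` has symbol `|ξ|²`. -/
def heatSymbol (p t : ℝ) (ξ : V) : ℝ := Real.exp (-(t * ‖ξ‖ ^ p))

theorem heatSymbol_smul {r : ℝ} (hr : 0 ≤ r) (ξ : V) :
    heatSymbol p t (r • ξ) = heatSymbol p (t * r ^ p) ξ := by
  rw [heatSymbol, heatSymbol, norm_smul, Real.norm_of_nonneg hr,
    Real.mul_rpow hr (norm_nonneg ξ), mul_assoc]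

theorem contDiffOn_heatSymbol (p t : ℝ) : ContDiffOn ℝ ∞ (heatSymbol p t : V → ℝ) {0}ᶜ :=
  (contDiffOn_const.mul (IsHomogeneousSymbol.norm_rpow p).contDiffOn).neg.exp

theorem one_add_pow_mul_exp_neg_le (n : ℕ) {s : ℝ} (hs : 0 ≤ s) :
    (1 + s) ^ n * Real.exp (-s) ≤ n.factorial * Real.exp 1 := by
  have h := Real.pow_div_factorial_le_exp (1 + s) (by positivity) n
  rwa [div_le_iff₀' (by positivity), Real.exp_add, ← mul_assoc, ← div_le_iff₀ (Real.exp_pos s),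
    div_eq_mul_inv, ← Real.exp_neg] at h

variable [FiniteDimensional ℝ V]

theorem exists_norm_iteratedFDeriv_exponent_le (p : ℝ) (n : ℕ) :
    ∃ K, 1 ≤ K ∧ ∀ t, 0 < t → ∀ ξ : V, ξ ≠ 0 → ∀ i, 1 ≤ i → i ≤ n →
      ‖iteratedFDeriv ℝ i (fun η : V => -(t * ‖η‖ ^ p)) ξ‖ ≤
        (K * (1 + t * ‖ξ‖ ^ p) / ‖ξ‖) ^ i := by
  choose A hA using fun i =>
    ((IsHomogeneousSymbol.norm_rpow (V := V) p).iteratedFDeriv i).exists_norm_le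
  obtain ⟨K, hK⟩ := ((Finset.range (n + 1)).image A ∪ {1}).bddAbove
  refine ⟨K, hK (by simp), fun t ht ξ hξ i hi hin => ?_⟩
  have hK1 : 1 ≤ K := hK (by simp)
  have hAK : A i ≤ K := hK (Finset.mem_coe.mpr (Finset.mem_union_left _
    (Finset.mem_image_of_mem A (Finset.mem_range_succ_iff.mpr hin))))
  have hpos : 0 < ‖ξ‖ := norm_pos_iff.mpr hξ
  have hsmooth : ContDiffAt ℝ i (fun η : V => ‖η‖ ^ p) ξ :=
    ((IsHomogeneousSymbol.norm_rpow p).contDiffOn.contDiffAt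
      (isOpen_compl_singleton.mem_nhds hξ)).of_le (mod_cast le_top)
  have hsmul : (fun η : V => -(t * ‖η‖ ^ p)) = (-t) • fun η : V => ‖η‖ ^ p := by
    ext η
    simp
  calc ‖iteratedFDeriv ℝ i (fun η : V => -(t * ‖η‖ ^ p)) ξ‖
      = t * ‖iteratedFDeriv ℝ i (fun η : V => ‖η‖ ^ p) ξ‖ := by
        rw [hsmul, iteratedFDeriv_const_smul_apply hsmooth, norm_smul, norm_neg,
          Real.norm_of_nonneg ht.le]
    _ ≤ t * (A i * ‖ξ‖ ^ (p - i)) := by gcongr; exact hA i ξ hξ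
    _ = A i * (t * ‖ξ‖ ^ p) / ‖ξ‖ ^ i := by rw [Real.rpow_sub hpos, Real.rpow_natCast]; ring
    _ ≤ K * (1 + t * ‖ξ‖ ^ p) / ‖ξ‖ ^ i := by gcongr; linarith
    _ ≤ (K * (1 + t * ‖ξ‖ ^ p)) ^ i / ‖ξ‖ ^ i := by
        gcongr
        refine le_self_pow₀ (one_le_mul_of_one_le_of_one_le hK1 ?_) (by omega)
        exact le_add_of_nonneg_right (by positivity)
    _ = (K * (1 + t * ‖ξ‖ ^ p) / ‖ξ‖) ^ i := (div_pow _ _ _).symm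

theorem exists_norm_iteratedFDeriv_heatSymbol_le (p : ℝ) (n : ℕ) :
    ∃ C, 0 ≤ C ∧ ∀ t, 0 < t → ∀ ξ : V, ξ ≠ 0 →
      ‖iteratedFDeriv ℝ n (heatSymbol p t) ξ‖ ≤
        C * ((1 + t * ‖ξ‖ ^ p) ^ n * heatSymbol p t ξ) * ‖ξ‖ ^ (-n : ℝ) := by
  obtain ⟨K, hK1, hK⟩ := exists_norm_iteratedFDeriv_exponent_le (V := V) p n
  refine ⟨n.factorial * K ^ n, by positivity, fun t ht ξ hξ => ?_⟩
  have hexp (i : ℕ) : ‖iteratedFDerivWithin ℝ i Real.exp univ (-(t * ‖ξ‖ ^ p))‖ ≤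
      heatSymbol p t ξ := by
    rw [iteratedFDerivWithin_univ, norm_iteratedFDeriv_eq_norm_iteratedDeriv,
      iteratedDeriv_eq_iterate, Real.iter_deriv_exp, Real.norm_of_nonneg (Real.exp_pos _).le,
      heatSymbol]
  have faaDiBruno := norm_iteratedFDerivWithin_comp_le (g := Real.exp)
    (f := fun η : V => -(t * ‖η‖ ^ p)) (n := n) Real.contDiff_exp.contDiffOn
    (contDiffOn_const.mul (IsHomogeneousSymbol.norm_rpow p).contDiffOn).neg (mod_cast le_top)
    uniqueDiffOn_univ isOpen_compl_singleton.uniqueDiffOn (mapsTo_univ _ _) hξ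
    (fun i _ => hexp i) fun i hi hin => by
      rw [iteratedFDerivWithin_of_isOpen i isOpen_compl_singleton hξ]
      exact hK t ht ξ hξ i hi hin
  rw [iteratedFDerivWithin_of_isOpen n isOpen_compl_singleton hξ] at faaDiBruno
  refine faaDiBruno.trans_eq ?_
  rw [Real.rpow_neg (norm_nonneg ξ), Real.rpow_natCast, div_pow, mul_pow]
  ring

theorem exists_pow_mul_norm_iteratedFDeriv_heatSymbol_le (p : ℝ) (M n : ℕ) :
    ∃ C, ∀ t, 0 < t → ∀ ξ : V, ξ ≠ 0 →
      (t * ‖ξ‖ ^ p) ^ M * ‖iteratedFDeriv ℝ n (heatSymbol p t) ξ‖ ≤ C * ‖ξ‖ ^ (-n : ℝ) := by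
  obtain ⟨C, hC0, hC⟩ := exists_norm_iteratedFDeriv_heatSymbol_le (V := V) p n
  refine ⟨C * ((M + n).factorial * Real.exp 1), fun t ht ξ hξ => ?_⟩
  have hs : 0 ≤ t * ‖ξ‖ ^ p := by positivity
  calc (t * ‖ξ‖ ^ p) ^ M * ‖iteratedFDeriv ℝ n (heatSymbol p t) ξ‖
      ≤ (1 + t * ‖ξ‖ ^ p) ^ M *
          (C * ((1 + t * ‖ξ‖ ^ p) ^ n * heatSymbol p t ξ) * ‖ξ‖ ^ (-n : ℝ)) := by
        gcongr
        · linarith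
        · exact hC t ht ξ hξ
    _ = C * ((1 + t * ‖ξ‖ ^ p) ^ (M + n) * Real.exp (-(t * ‖ξ‖ ^ p))) * ‖ξ‖ ^ (-n : ℝ) := by
        rw [heatSymbol, pow_add]
        ring
    _ ≤ C * ((M + n).factorial * Real.exp 1) * ‖ξ‖ ^ (-n : ℝ) := by
        gcongr ?_ * _
        exact mul_le_mul_of_nonneg_left (one_add_pow_mul_exp_neg_le (M + n) hs) hC0

theorem isSymbolFamily_heatSymbol (p : ℝ) :
    IsSymbolFamily (Ioi 0) 0 (heatSymbol p : ℝ → V → ℝ) where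
  contDiffOn t _ := contDiffOn_heatSymbol p t
  exists_bound n := by
    obtain ⟨C, hC⟩ := exists_pow_mul_norm_iteratedFDeriv_heatSymbol_le (V := V) p 0 n
    exact ⟨C, fun t ht ξ hξ => by simpa using hC t ht ξ hξ⟩

theorem isSymbolFamily_heatSymbol_singleton (p : ℝ) (M : ℕ) (ht : 0 < t) :
    IsSymbolFamily {t} (-(p * M)) (heatSymbol p : ℝ → V → ℝ) where
  contDiffOn t _ := contDiffOn_heatSymbol p t
  exists_bound n := by
    obtain ⟨C, hC⟩ := exists_pow_mul_norm_iteratedFDeriv_heatSymbol_le (V := V) p M n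
    refine ⟨C / t ^ M, ?_⟩
    rintro _ rfl ξ hξ
    have hpos : 0 < ‖ξ‖ := norm_pos_iff.mpr hξ
    have hexp : ‖ξ‖ ^ (-(p * M) - n) * (‖ξ‖ ^ p) ^ M = ‖ξ‖ ^ (-n : ℝ) := by
      rw [← Real.rpow_mul_natCast hpos.le, ← Real.rpow_add hpos]
      congr 1
      ring
    have h := hC _ ht ξ hξ
    rw [← hexp, mul_pow] at h
    have hpow : 0 < (‖ξ‖ ^ p) ^ M := by positivity
    rw [div_mul_eq_mul_div, le_div_iff₀ (by positivity), ← mul_le_mul_iff_left₀ hpow]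
    calc _ = _ := by ring
      _ ≤ _ := h
      _ = _ := by ring

end HeatSymbol

section FrequencySplitting

variable {ι V F : Type*} [NormedAddCommGroup V] [InnerProductSpace ℝ V] [FiniteDimensional ℝ V]
  [NormedAddCommGroup F] [NormedSpace ℝ F] {γ : ℝ} {S : Set ι} {m : ι → V → F} {i : ι} {ξ : V}

variable (V) in
/-- The cutoff separating low from high frequencies: equal to one on the closed unit ball and
supported in the closed ball of radius two. -/
def unitBump : ContDiffBump (0 : V) := ⟨1, 2, one_pos, one_lt_two⟩

/-- The part of a multiplier at frequencies `|ξ| ≲ 1`. -/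
def lowPart (m : V → F) (ξ : V) : F := unitBump V ξ • m ξ

/-- The part of a multiplier at frequencies `|ξ| ≳ 1`. -/
def highPart (m : V → F) (ξ : V) : F := (1 - unitBump V ξ) • m ξ

theorem lowPart_add_highPart (m : V → F) : lowPart m + highPart m = m := by
  ext ξ
  rw [Pi.add_apply, lowPart, highPart, ← add_smul, add_sub_cancel, one_smul]

theorem highPart_eq_zero (m : V → F) (hξ : ‖ξ‖ ≤ 1) : highPart m ξ = 0 := by
  have hone : unitBump V ξ = 1 :=
    (unitBump V).one_of_mem_closedBall (mem_closedBall_zero_iff.mpr hξ)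
  rw [highPart, hone, sub_self, zero_smul]

theorem highPart_eventuallyEq_zero (m : V → F) (hξ : ‖ξ‖ < 1) : highPart m =ᶠ[nhds ξ] 0 := by
  filter_upwards [isOpen_ball.mem_nhds (mem_ball_zero_iff.mpr hξ)] with η hη
  exact highPart_eq_zero m (mem_ball_zero_iff.mp hη).le

theorem norm_lowPart_le (m : V → F) (ξ : V) :
    ‖lowPart m ξ‖ ≤ (ball 0 2).indicator (fun ξ => ‖m ξ‖) ξ := by
  by_cases hξ : ξ ∈ ball 0 2
  · rw [indicator_of_mem hξ, lowPart, norm_smul, Real.norm_of_nonneg (unitBump V).nonneg]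
    exact mul_le_of_le_one_left (norm_nonneg _) (unitBump V).le_one
  · rw [indicator_of_notMem hξ, lowPart, (unitBump V).zero_of_le_dist (not_lt.mp hξ), zero_smul,
      norm_zero]

namespace IsSymbolFamily

protected theorem highPart (hm : IsSymbolFamily S γ m) :
    IsSymbolFamily S γ (fun i => highPart (m i)) := by
  have hone := (IsHomogeneousSymbol.const (V := V) (1 : ℝ)).isSymbolFamily S
  have hbump := of_hasCompactSupport (unitBump V).contDiff (unitBump V).hasCompactSupport S
  have h := (hone.sub hbump).smul hm
  rwa [zero_add] at h

theorem contDiff_highPart (hm : IsSymbolFamily S γ m) (hi : i ∈ S) :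
    ContDiff ℝ ∞ (highPart (m i)) := by
  refine contDiff_iff_contDiffAt.mpr fun ξ => ?_
  rcases eq_or_ne ξ 0 with rfl | hξ
  · exact contDiffAt_const.congr_of_eventuallyEq
      (highPart_eventuallyEq_zero (m i) (norm_zero.trans_lt one_pos))
  · exact (hm.highPart.contDiffOn i hi).contDiffAt (isOpen_compl_singleton.mem_nhds hξ)

theorem exists_norm_iteratedFDeriv_highPart_le (hm : IsSymbolFamily S γ m) {n : ℕ} {q : ℝ}
    (hq : 0 ≤ q) (hn : γ - n ≤ -q) :
    ∃ C, ∀ i ∈ S, ∀ ξ, ‖iteratedFDeriv ℝ n (highPart (m i)) ξ‖ ≤ C * (1 + ‖ξ‖) ^ (-q) := by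
  obtain ⟨C, hC⟩ := hm.highPart.exists_bound n
  refine ⟨|C| * 2 ^ q, fun i hi ξ => ?_⟩
  rcases lt_or_ge ‖ξ‖ 1 with hlt | hge
  · rw [((highPart_eventuallyEq_zero (m i) hlt).iteratedFDeriv ℝ n).eq_of_nhds,
      iteratedFDeriv_zero, Pi.zero_apply, norm_zero]
    positivity
  · have hpos : 0 < ‖ξ‖ := one_pos.trans_le hge
    calc ‖iteratedFDeriv ℝ n (highPart (m i)) ξ‖
        ≤ C * ‖ξ‖ ^ (γ - n) := hC i hi ξ (norm_pos_iff.mp hpos)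
      _ ≤ |C| * ‖ξ‖ ^ (-q) := by
        gcongr
        exact le_abs_self C
      _ ≤ |C| * ((1 + ‖ξ‖) / 2) ^ (-q) := by
        gcongr ?_ * ?_
        exact Real.rpow_le_rpow_of_nonpos (by positivity) (by linarith) (neg_nonpos.mpr hq)
      _ = |C| * 2 ^ q * (1 + ‖ξ‖) ^ (-q) := by
        rw [Real.div_rpow (by positivity) zero_le_two, Real.rpow_neg zero_le_two, div_inv_eq_mul]
        ring

variable [MeasurableSpace V] [BorelSpace V]

theorem exists_integral_norm_iteratedFDeriv_highPart_le (hm : IsSymbolFamily S γ m) {n : ℕ}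
    (hn : γ - n < -finrank ℝ V) :
    ∃ C, ∀ i ∈ S, Integrable (iteratedFDeriv ℝ n (highPart (m i))) ∧
      ∫ ξ, ‖iteratedFDeriv ℝ n (highPart (m i)) ξ‖ ≤ C := by
  obtain ⟨C, hC⟩ := hm.exists_norm_iteratedFDeriv_highPart_le (n := n) (q := n - γ)
    (by linarith [(finrank ℝ V).cast_nonneg (α := ℝ)]) (by linarith)
  have hmaj : Integrable fun ξ : V => C * (1 + ‖ξ‖) ^ (-(n - γ)) :=
    (integrable_one_add_norm (by linarith)).const_mul C
  refine ⟨∫ ξ : V, C * (1 + ‖ξ‖) ^ (-(n - γ)), fun i hi => ?_⟩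
  have hcont : Continuous (iteratedFDeriv ℝ n (highPart (m i))) :=
    (hm.contDiff_highPart hi).continuous_iteratedFDeriv (mod_cast le_top)
  have hint : Integrable (iteratedFDeriv ℝ n (highPart (m i))) :=
    hmaj.mono' hcont.aestronglyMeasurable (.of_forall (hC i hi))
  exact ⟨hint, integral_mono hint.norm hmaj (hC i hi)⟩

variable [Nontrivial V]

theorem aestronglyMeasurable (hm : IsSymbolFamily S γ m) (hi : i ∈ S) :
    AEStronglyMeasurable (m i) := by
  have h := (hm.contDiffOn i hi).continuousOn.aestronglyMeasurable (μ := volume)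
    (measurableSet_singleton 0).compl
  rwa [Measure.restrict_eq_self_of_ae_mem (by simp [ae_iff])] at h

theorem exists_integral_norm_lowPart_le (hm : IsSymbolFamily S γ m)
    (hγ : -finrank ℝ V < γ) :
    ∃ C, ∀ i ∈ S, Integrable (lowPart (m i)) ∧ ∫ ξ, ‖lowPart (m i) ξ‖ ≤ C := by
  obtain ⟨C, hC⟩ := hm.exists_bound 0
  have hmaj : Integrable ((ball (0 : V) 2).indicator fun ξ => C * ‖ξ‖ ^ γ) := by
    have hmeas : AEStronglyMeasurable fun ξ : V => C * ‖ξ‖ ^ γ :=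
      (measurable_norm.pow_const γ |>.const_mul C).aestronglyMeasurable
    refine (integrable_indicator_iff measurableSet_ball).mpr
      (integrableOn_ball_of_norm_le_rpow (C := |C|) (α := -γ) (finrank_pos) (by linarith) ?_ hmeas)
    refine .of_forall fun ξ => ?_
    rw [norm_mul, neg_neg, Real.norm_eq_abs, Real.norm_of_nonneg (by positivity)]
  refine ⟨∫ ξ : V, (ball 0 2).indicator (fun ξ => C * ‖ξ‖ ^ γ) ξ, fun i hi => ?_⟩
  have hle : ∀ᵐ ξ : V, ‖lowPart (m i) ξ‖ ≤ (ball 0 2).indicator (fun ξ => C * ‖ξ‖ ^ γ) ξ := by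
    filter_upwards [Measure.ae_ne volume (0 : V)] with ξ hξ
    refine (norm_lowPart_le (m i) ξ).trans (indicator_le_indicator ?_)
    simpa using hC i hi ξ hξ
  have hint : Integrable (lowPart (m i)) := hmaj.mono'
    ((unitBump V).continuous.aestronglyMeasurable.smul (hm.aestronglyMeasurable hi)) hle
  exact ⟨hint, integral_mono_ae hint.norm hmaj hle⟩

end IsSymbolFamily

end FrequencySplitting

section Fourier

variable {ι V F : Type*} [NormedAddCommGroup V] [InnerProductSpace ℝ V] [FiniteDimensional ℝ V]
  [MeasurableSpace V] [BorelSpace V] [NormedAddCommGroup F] [NormedSpace ℂ F]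
  {γ : ℝ} {S : Set ι} {m : ι → V → F}

theorem norm_fourier_le_integral_norm (f : V → F) (x : V) : ‖𝓕 f x‖ ≤ ∫ ξ, ‖f ξ‖ :=
  VectorFourier.norm_fourierIntegral_le_integral_norm _ _ _ _ _

theorem pow_mul_norm_fourier_le_integral_norm_iteratedFDeriv {f : V → F} {N : ℕ}
    (hf : ContDiff ℝ N f) (hint : ∀ n ≤ N, Integrable (iteratedFDeriv ℝ n f)) (x : V) :
    (2 * Real.pi * ‖x‖) ^ N * ‖𝓕 f x‖ ≤ ∫ ξ, ‖iteratedFDeriv ℝ N f ξ‖ := by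
  have hfourier := congrFun (Real.fourier_iteratedFDeriv hf
    (fun n hn => hint n (by exact_mod_cast hn)) le_rfl) x
  have hinner : innerSL ℝ x (‖x‖⁻¹ • x) = ‖x‖ := by
    rw [innerSL_apply_apply, inner_smul_right, real_inner_self_eq_norm_sq, sq, mul_comm,
      mul_self_mul_inv]
  have hunit : ‖‖x‖⁻¹ • x‖ ≤ 1 := by
    rw [norm_smul, norm_inv, norm_norm]
    exact inv_mul_le_one
  calc (2 * Real.pi * ‖x‖) ^ N * ‖𝓕 f x‖
      = ‖𝓕 (iteratedFDeriv ℝ N f) x fun _ => ‖x‖⁻¹ • x‖ := by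
        rw [hfourier, VectorFourier.fourierPowSMulRight_apply]
        simp only [neg_apply, hinner, Finset.prod_const, Finset.card_univ, Fintype.card_fin,
          norm_smul, norm_pow, norm_neg, norm_mul, Complex.norm_I, Complex.norm_real,
          Complex.norm_ofNat, norm_norm, Real.norm_of_nonneg Real.pi_pos.le, mul_one, mul_pow,
          mul_assoc]
    _ ≤ ‖𝓕 (iteratedFDeriv ℝ N f) x‖ :=
        ContinuousMultilinearMap.unit_le_opNorm _ ((pi_norm_le_iff_of_nonneg zero_le_one).mpr
          fun _ => hunit)
    _ ≤ ∫ ξ, ‖iteratedFDeriv ℝ N f ξ‖ := norm_fourier_le_integral_norm _ x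

theorem IsSymbolFamily.exists_norm_fourier_highPart_le (hm : IsSymbolFamily S γ m)
    (hdecay : ∀ i ∈ S, ∀ n, Integrable (iteratedFDeriv ℝ n (highPart (m i)))) :
    ∃ C, ∀ i ∈ S, ∀ x : V, ‖x‖ = 1 → ‖𝓕 (highPart (m i)) x‖ ≤ C := by
  obtain ⟨N, hN⟩ := exists_nat_gt (γ + finrank ℝ V)
  obtain ⟨C, hC⟩ := hm.exists_integral_norm_iteratedFDeriv_highPart_le (n := N) (by linarith)
  refine ⟨C, fun i hi x hx => ?_⟩
  have hpi : 1 ≤ (2 * Real.pi * ‖x‖) ^ N :=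
    one_le_pow₀ (by rw [hx]; linarith [Real.pi_gt_three])
  calc ‖𝓕 (highPart (m i)) x‖
      ≤ (2 * Real.pi * ‖x‖) ^ N * ‖𝓕 (highPart (m i)) x‖ :=
        le_mul_of_one_le_left (norm_nonneg _) hpi
    _ ≤ ∫ ξ, ‖iteratedFDeriv ℝ N (highPart (m i)) ξ‖ :=
        pow_mul_norm_fourier_le_integral_norm_iteratedFDeriv
          ((hm.contDiff_highPart hi).of_le (mod_cast le_top)) (fun n _ => hdecay i hi n) x
    _ ≤ C := (hC i hi).2

theorem IsSymbolFamily.exists_norm_fourier_le [Nontrivial V] (hm : IsSymbolFamily S γ m)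
    (hγ : -finrank ℝ V < γ)
    (hdecay : ∀ i ∈ S, ∃ δ, δ < -(finrank ℝ V : ℝ) ∧ IsSymbolFamily {i} δ m) :
    ∃ C, ∀ i ∈ S, Integrable (m i) ∧ ∀ x : V, ‖x‖ = 1 → ‖𝓕 (m i) x‖ ≤ C := by
  have hint : ∀ i ∈ S, ∀ n, Integrable (iteratedFDeriv ℝ n (highPart (m i))) := by
    intro i hi n
    obtain ⟨δ, hδ, hmδ⟩ := hdecay i hi
    obtain ⟨_, hC⟩ := hmδ.exists_integral_norm_iteratedFDeriv_highPart_le (n := n)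
      (by linarith [n.cast_nonneg (α := ℝ)])
    exact (hC i rfl).1
  obtain ⟨A, hA⟩ := hm.exists_integral_norm_lowPart_le hγ
  obtain ⟨B, hB⟩ := hm.exists_norm_fourier_highPart_le hint
  refine ⟨A + B, fun i hi => ?_⟩
  obtain ⟨hlow, hlowA⟩ := hA i hi
  have hhigh : Integrable (highPart (m i)) := by
    refine (integrable_norm_iff (hm.contDiff_highPart hi).continuous.aestronglyMeasurable).mp ?_
    simpa only [norm_iteratedFDeriv_zero] using (hint i hi 0).norm
  refine ⟨lowPart_add_highPart (m i) ▸ hlow.add hhigh, fun x hx => ?_⟩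
  have hadd : 𝓕 (lowPart (m i) + highPart (m i)) = 𝓕 (lowPart (m i)) + 𝓕 (highPart (m i)) :=
    VectorFourier.fourierIntegral_add Real.continuous_fourierChar continuous_inner hlow hhigh
  calc ‖𝓕 (m i) x‖ = ‖𝓕 (lowPart (m i)) x + 𝓕 (highPart (m i)) x‖ := by
        rw [← Pi.add_apply, ← hadd, lowPart_add_highPart]
    _ ≤ ‖𝓕 (lowPart (m i)) x‖ + ‖𝓕 (highPart (m i)) x‖ := norm_add_le _ _
    _ ≤ A + B := add_le_add ((norm_fourier_le_integral_norm _ x).trans hlowA) (hB i hi x hx)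

end Fourier

section HeatMultiplier

variable {V F : Type*} [NormedAddCommGroup V] [InnerProductSpace ℝ V] [NormedAddCommGroup F]
  [NormedSpace ℂ F] {Q : V → F} {γ p t r : ℝ}

/-- The Fourier symbol `e^{-t|ξ|ᵖ} Q(ξ)` of the multiplier operator `Q` applied to the fractional
heat kernel. -/
def heatMultiplier (p t : ℝ) (Q : V → F) (ξ : V) : F := heatSymbol p t ξ • Q ξ

namespace IsHomogeneousSymbol

theorem heatMultiplier_smul (hQ : IsHomogeneousSymbol γ Q) (hr : 0 < r) {ξ : V} (hξ : ξ ≠ 0) :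
    heatMultiplier p t Q (r • ξ) = r ^ γ • heatMultiplier p (t * r ^ p) Q ξ := by
  rw [heatMultiplier, heatMultiplier, heatSymbol_smul hr.le, hQ.map_smul r hr ξ hξ, smul_comm]

theorem fourierPowSMulRight (hQ : IsHomogeneousSymbol γ Q) (k : ℕ) :
    IsHomogeneousSymbol (γ + k)
      (fun ξ => VectorFourier.fourierPowSMulRight (innerSL ℝ) Q ξ k) where
  contDiffOn := by
    simp_rw [VectorFourier.fourierPowSMulRight_eq_comp]
    refine ContDiffOn.const_smul _ ((ContinuousMultilinearMap.smulRightL ℝ (fun _ : Fin k => V)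
      F).isBoundedBilinearMap.contDiff.comp₂_contDiffOn ?_ hQ.contDiffOn)
    exact ((ContinuousMultilinearMap.contDiff _).comp
      (contDiff_pi.mpr fun _ => (innerSL ℝ).contDiff)).contDiffOn
  map_smul r hr ξ hξ := by
    ext v
    rw [smul_apply, VectorFourier.fourierPowSMulRight_apply,
      VectorFourier.fourierPowSMulRight_apply, hQ.map_smul r hr ξ hξ, Real.rpow_add hr,
      Real.rpow_natCast]
    simp only [_root_.map_smul, smul_apply, smul_eq_mul, Finset.prod_mul_distrib, Finset.prod_const,
      Finset.card_univ, Fintype.card_fin]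
    module

variable [FiniteDimensional ℝ V] [MeasurableSpace V] [BorelSpace V] [Nontrivial V]

theorem fourier_heatMultiplier (hQ : IsHomogeneousSymbol γ Q) (p t : ℝ) (hr : 0 < r) (x : V) :
    𝓕 (heatMultiplier p t Q) x =
      r ^ (finrank ℝ V + γ) • 𝓕 (heatMultiplier p (t * r ^ p) Q) (r • x) := by
  have hscale := Measure.integral_comp_smul_of_nonneg (volume : Measure V)
    (fun ξ => Real.fourierChar (-inner ℝ ξ x) • heatMultiplier p t Q ξ) r (hR := hr.le)
  have hhom : ∫ ξ : V, Real.fourierChar (-inner ℝ (r • ξ) x) • heatMultiplier p t Q (r • ξ) =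
      r ^ γ • 𝓕 (heatMultiplier p (t * r ^ p) Q) (r • x) := by
    rw [Real.fourier_eq, ← integral_smul]
    refine integral_congr_ae ?_
    filter_upwards [Measure.ae_ne volume (0 : V)] with ξ hξ
    rw [hQ.heatMultiplier_smul hr hξ, real_inner_smul_left, real_inner_smul_right, smul_comm]
  rw [← Real.fourier_eq, hhom, eq_inv_smul_iff₀ (by positivity)] at hscale
  rw [← hscale, smul_smul, Real.rpow_add hr, Real.rpow_natCast]

theorem exists_norm_fourier_heatMultiplier_le_of_norm_eq_one (hQ : IsHomogeneousSymbol γ Q)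
    (hp : 0 < p) (hγ : -finrank ℝ V < γ) :
    ∃ C, ∀ t, 0 < t → Integrable (heatMultiplier p t Q) ∧
      ∀ x, ‖x‖ = 1 → ‖𝓕 (heatMultiplier p t Q) x‖ ≤ C := by
  have huniform := (isSymbolFamily_heatSymbol p).smul (hQ.isSymbolFamily (Ioi 0))
  rw [zero_add] at huniform
  refine huniform.exists_norm_fourier_le hγ fun t ht => ?_
  obtain ⟨M, hM⟩ := exists_nat_gt ((γ + finrank ℝ V) / p)
  rw [div_lt_iff₀' hp] at hM
  exact ⟨-(p * M) + γ, by linarith,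
    (isSymbolFamily_heatSymbol_singleton p M ht).smul (hQ.isSymbolFamily {t})⟩

theorem integrable_heatMultiplier (hQ : IsHomogeneousSymbol γ Q) (hp : 0 < p)
    (hγ : -finrank ℝ V < γ) (ht : 0 < t) : Integrable (heatMultiplier p t Q) :=
  let ⟨_, hC⟩ := hQ.exists_norm_fourier_heatMultiplier_le_of_norm_eq_one hp hγ
  (hC t ht).1

theorem exists_norm_fourier_heatMultiplier_le (hQ : IsHomogeneousSymbol γ Q) (hp : 0 < p)
    (hγ : -finrank ℝ V < γ) :
    ∃ C, ∀ t, 0 < t → ∀ x, ‖𝓕 (heatMultiplier p t Q) x‖ ≤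
      C * (t ^ (1 / p) + ‖x‖) ^ (-(finrank ℝ V + γ)) := by
  obtain ⟨A, hA⟩ := hQ.exists_norm_fourier_heatMultiplier_le_of_norm_eq_one hp hγ
  set B := ∫ ξ, ‖heatMultiplier p 1 Q ξ‖
  refine ⟨2 ^ (finrank ℝ V + γ) * max A B, fun t ht x => ?_⟩
  have hT : 0 < t ^ (1 / p) := by positivity
  obtain ⟨r, hr, hr2, hbound⟩ : ∃ r, 0 < r ∧ r * (t ^ (1 / p) + ‖x‖) ≤ 2 ∧
      ‖𝓕 (heatMultiplier p (t * r ^ p) Q) (r • x)‖ ≤ max A B := by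
    rcases le_total (t ^ (1 / p)) ‖x‖ with hle | hle
    · have hx : 0 < ‖x‖ := hT.trans_le hle
      refine ⟨‖x‖⁻¹, by positivity, ?_, le_max_of_le_left ((hA _ (by positivity)).2 _ ?_)⟩
      · rw [inv_mul_le_iff₀ hx]
        linarith
      · rw [norm_smul, norm_inv, norm_norm, inv_mul_cancel₀ hx.ne']
    · refine ⟨(t ^ (1 / p))⁻¹, by positivity, ?_, ?_⟩
      · rw [inv_mul_le_iff₀ hT]
        linarith
      · have hone : t * (t ^ (1 / p))⁻¹ ^ p = 1 := by
          rw [Real.inv_rpow hT.le, one_div, Real.rpow_inv_rpow ht.le hp.ne',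
            mul_inv_cancel₀ ht.ne']
        rw [hone]
        exact le_max_of_le_right (norm_fourier_le_integral_norm _ _)
  have hR : 0 < t ^ (1 / p) + ‖x‖ := by positivity
  calc ‖𝓕 (heatMultiplier p t Q) x‖
      = r ^ (finrank ℝ V + γ) * ‖𝓕 (heatMultiplier p (t * r ^ p) Q) (r • x)‖ := by
        rw [hQ.fourier_heatMultiplier p t hr, norm_smul, Real.norm_of_nonneg (by positivity)]
    _ ≤ (2 / (t ^ (1 / p) + ‖x‖)) ^ (finrank ℝ V + γ) * max A B := by
        gcongr
        · linarith
        · exact (le_div_iff₀ hR).mpr hr2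
    _ = 2 ^ (finrank ℝ V + γ) * max A B * (t ^ (1 / p) + ‖x‖) ^ (-(finrank ℝ V + γ)) := by
        rw [Real.div_rpow zero_le_two hR.le, Real.rpow_neg hR.le]
        ring

theorem integrable_pow_mul_norm_heatMultiplier (hQ : IsHomogeneousSymbol γ Q) (hp : 0 < p) {k n : ℕ}
    (hγ : -finrank ℝ V < γ + k) (ht : 0 < t) (hint : Integrable (heatMultiplier p t Q))
    (hn : n ≤ k) : Integrable fun ξ => ‖ξ‖ ^ n * ‖heatMultiplier p t Q ξ‖ := by
  have hk : Integrable fun ξ => ‖ξ‖ ^ k * ‖heatMultiplier p t Q ξ‖ := by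
    have hQk := (norm_rpow (V := V) k).smul hQ
    refine (hQk.integrable_heatMultiplier hp (by linarith) ht).norm.congr (.of_forall fun ξ => ?_)
    simp only [heatMultiplier, norm_smul, Real.rpow_natCast, norm_pow, norm_norm]
    ring
  refine (hint.norm.add hk).mono'
    ((continuous_norm.pow n).aestronglyMeasurable.mul hint.norm.aestronglyMeasurable)
    (.of_forall fun ξ => ?_)
  have hpow : ‖ξ‖ ^ n ≤ 1 + ‖ξ‖ ^ k := by
    rcases le_total ‖ξ‖ 1 with hle | hge
    · exact (pow_le_one₀ (norm_nonneg ξ) hle).trans (le_add_of_nonneg_right (by positivity))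
    · exact (pow_le_pow_right₀ hge hn).trans (le_add_of_nonneg_left zero_le_one)
  calc ‖‖ξ‖ ^ n * ‖heatMultiplier p t Q ξ‖‖ = ‖ξ‖ ^ n * ‖heatMultiplier p t Q ξ‖ :=
        Real.norm_of_nonneg (by positivity)
    _ ≤ (1 + ‖ξ‖ ^ k) * ‖heatMultiplier p t Q ξ‖ := by gcongr
    _ = ‖heatMultiplier p t Q ξ‖ + ‖ξ‖ ^ k * ‖heatMultiplier p t Q ξ‖ := by ring

theorem iteratedFDeriv_fourier_heatMultiplier (hQ : IsHomogeneousSymbol γ Q) (hp : 0 < p) {k : ℕ}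
    (hγ : -finrank ℝ V < γ + k) (ht : 0 < t) (hint : Integrable (heatMultiplier p t Q)) :
    iteratedFDeriv ℝ k (𝓕 (heatMultiplier p t Q)) = 𝓕 (heatMultiplier p t fun ξ =>
      VectorFourier.fourierPowSMulRight (innerSL ℝ) Q ξ k) := by
  rw [Real.iteratedFDeriv_fourier (N := k) (fun n hn => hQ.integrable_pow_mul_norm_heatMultiplier
    hp hγ ht hint (by exact_mod_cast hn)) hint.aestronglyMeasurable le_rfl]
  congr 1
  ext ξ v
  simp only [heatMultiplier, VectorFourier.fourierPowSMulRight_apply, smul_apply]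
  module

theorem exists_norm_iteratedFDeriv_fourier_heatMultiplier_le (hQ : IsHomogeneousSymbol γ Q)
    (hp : 0 < p) (k : ℕ) (hγ : -finrank ℝ V < γ + k) :
    ∃ C, ∀ t, 0 < t → ∀ x, ‖iteratedFDeriv ℝ k (𝓕 (heatMultiplier p t Q)) x‖ ≤
      C * (t ^ (1 / p) + ‖x‖) ^ (-(finrank ℝ V + (γ + k))) := by
  obtain ⟨C, hC⟩ := (hQ.fourierPowSMulRight k).exists_norm_fourier_heatMultiplier_le hp hγ
  refine ⟨|C|, fun t ht x => ?_⟩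
  by_cases hint : Integrable (heatMultiplier p t Q)
  · rw [hQ.iteratedFDeriv_fourier_heatMultiplier hp hγ ht hint]
    refine (hC t ht x).trans ?_
    gcongr
    exact le_abs_self C
  · -- For `γ ≤ -dim V` the symbol need not be integrable at the origin, and then its Fourier
    -- integral takes the junk value `0`.
    have hzero : 𝓕 (heatMultiplier p t Q) = 0 := by
      ext y
      exact integral_undef (mt (Real.fourierIntegral_convergent_iff y).mp hint)
    rw [hzero, iteratedFDeriv_zero, Pi.zero_apply, norm_zero]
    positivity

end IsHomogeneousSymbol

end HeatMultiplier

section Oseen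

/-- The Fourier symbol `|ξ|^β (δ_{ab} - ξ_a ξ_b / |ξ|²)` of the entry `(a, b)` of
`(-Δ)^{β/2}` composed with the Leray projection. -/
def fracLeraySymbol {ι : Type*} [Fintype ι] [DecidableEq ι] (β : ℝ) (a b : ι)
    (ξ : EuclideanSpace ℝ ι) : ℝ :=
  ‖ξ‖ ^ β * ((if a = b then 1 else 0) - ξ a * ξ b / ‖ξ‖ ^ 2)

theorem isHomogeneousSymbol_fracLeraySymbol {ι : Type*} [Fintype ι] [DecidableEq ι] (β : ℝ)
    (a b : ι) : IsHomogeneousSymbol β (fracLeraySymbol β a b) := by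
  have hcoord (i : ι) : IsHomogeneousSymbol 1 (fun ξ : EuclideanSpace ℝ ι => ξ i) :=
    .clm (EuclideanSpace.proj i)
  have hriesz : IsHomogeneousSymbol 0
      (fun ξ : EuclideanSpace ℝ ι => ξ a * ξ b / ‖ξ‖ ^ 2) := by
    convert (hcoord a).smul ((hcoord b).smul (.norm_rpow (-2))) using 2 with ξ
    · norm_num
    · rw [Real.rpow_neg (norm_nonneg ξ), Real.rpow_two, smul_eq_mul, smul_eq_mul, ← mul_assoc,
        div_eq_mul_inv]
  have hdelta : IsHomogeneousSymbol 0
      (fun _ : EuclideanSpace ℝ ι => if a = b then (1 : ℝ) else 0) := .const _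
  have h := (IsHomogeneousSymbol.norm_rpow β).smul (hdelta.sub hriesz)
  rwa [add_zero] at h

theorem oseenFrac_eq_fourier_heatMultiplier (α β : ℝ) (a b : Fin 2) (t : ℝ) :
    oseenFrac α β a b t =
      𝓕 (heatMultiplier (2 * α) t fun ξ => (fracLeraySymbol β a b ξ : ℂ)) := by
  rw [oseenFrac, Real.fourierInv_eq_fourier_comp_neg]
  congr 1
  ext ξ
  simp only [oseenSym, heatMultiplier, heatSymbol, fracLeraySymbol, norm_neg, PiLp.neg_apply,
    neg_mul_neg, Complex.real_smul]
  push_cast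
  ring

theorem oseen_kernel_decay_general {α : ℝ} (hα : 0 < α) (k : ℕ) (β : ℝ) (hβk : -2 < β + k) :
    ∃ C > 0, ∀ (a b : Fin 2) (t : ℝ), 0 < t → ∀ x : E2,
      ‖iteratedFDeriv ℝ k (oseenFrac α β a b t) x‖ ≤
        C * (t ^ (1 / (2 * α)) + ‖x‖) ^ (-(2 + β + (k : ℝ))) := by
  have hentry (a b : Fin 2) := ((isHomogeneousSymbol_fracLeraySymbol β a b).clm_comp
    Complex.ofRealCLM).exists_norm_iteratedFDeriv_fourier_heatMultiplier_le
      (mul_pos two_pos hα) k (by rwa [finrank_euclideanSpace_fin])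
  choose C hC using hentry
  obtain ⟨M, hM⟩ := (Set.finite_range fun ab : Fin 2 × Fin 2 => C ab.1 ab.2).bddAbove
  refine ⟨max M 1, by positivity, fun a b t ht x => ?_⟩
  have hCM : C a b ≤ max M 1 := le_max_of_le_left (hM ⟨(a, b), rfl⟩)
  have hdecay := hC a b t ht x
  rw [finrank_euclideanSpace_fin, Nat.cast_ofNat, ← add_assoc] at hdecay
  rw [oseenFrac_eq_fourier_heatMultiplier]
  exact hdecay.trans (by gcongr)

end Oseen

/-- decay of the nonlocal Oseen kernel:
`|∇^k (−Δ)^{β/2} 𝒪(x,t)| ≤ C (t^{1/(2α)} + |x|)^{−2−β−k}` for `β + k > −2`. -/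
theorem oseen_kernel_decay (α : ℝ) (hα : α ∈ Set.Ioo (1/2 : ℝ) 1)
    (k : ℕ) (β : ℝ) (hβk : -2 < β + k) :
    ∃ C > 0, ∀ (a b : Fin 2) (t : ℝ), 0 < t → ∀ x : E2,
      ‖iteratedFDeriv ℝ k (oseenFrac α β a b t) x‖ ≤
        C * (t ^ (1 / (2 * α)) + ‖x‖) ^ (-(2 + β + (k : ℝ))) := by
  exact oseen_kernel_decay_general (by linarith [hα.1]) k β hβk
end
end

section
/- In ℝ², let u₀(x) = |x|^{−β₀} ū₀(x/|x|) with β₀ ∈ (0,1), ū₀ ∈ C^{m,β}(𝕊¹) for some integer m ≥ 0 and β ∈ (0,1]. Then for every γ ∈ (0,β), (−Δ)^{γ/2}u₀ is again homogeneous: (−Δ)^{γ/2} u₀(x) = |x|^{−β₀−γ} ũ_{0,γ}(x/|x|) for some ũ_{0,γ} ∈ C^{m,β−γ}(𝕊¹) with ‖ũ_{0,γ}‖_{C^{m,β−γ}(𝕊¹)} ≤ C(m,β₀,β,γ) ‖ū₀‖_{C^{m,β}(𝕊¹)}. -/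
open MeasureTheory

noncomputable section

/-- Parametrization of the unit circle `𝕊¹ ⊂ ℝ²`. -/
def circ (t : ℝ) : E2 := (WithLp.equiv 2 (Fin 2 → ℝ)).symm ![Real.cos t, Real.sin t]

/-- The `(−β₀)`-homogeneous datum `u₀(x) = |x|^{−β₀} ū₀(x/|x|)`. -/
def homData (β₀ : ℝ) (ubar : E2 → ℂ) (x : E2) : ℂ :=
  ((‖x‖ ^ (-β₀ : ℝ) : ℝ) : ℂ) * ubar (‖x‖⁻¹ • x)

/-- `(−Δ)^{γ/2} u₀` via the (absolutely convergent) singular integral, up to `c_γ`. -/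
def fracHom (β₀ γ : ℝ) (ubar : E2 → ℂ) (x : E2) : ℂ :=
  ∫ y : E2, (homData β₀ ubar x - homData β₀ ubar y) / ((‖x - y‖ ^ (2 + γ) : ℝ) : ℂ)

/-!
Scaling `y ↦ |x| y` in the singular integral gives the homogeneity, so only its values on the unit
circle matter. Rotating the integration variable so that the base point `e^{it}` becomes `1 ∈ ℂ`,
the integral becomes
  `G h(t) = ∫ ‖1 - z‖^{-2-γ} (h(t) - ‖z‖^{-β₀} h(t + arg z)) dz`,
in which `t` enters only through `h`. Hence `G` commutes with `d/dt`, and it suffices to bound `G`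
from `C^{0,β}` to `C^{0,β-γ}`. Split the bracket as
`(h(t) - h(t + s)) + (1 - ‖z‖^{-β₀}) h(t + s)` with `s = arg z`. The second part has a kernel which
is integrable for `-γ < β₀ < 2`, because the weight is Lipschitz near `‖z‖ = 1` and `γ < 1`. For the
first part, the difference between the values at `t` and `t'` is at most
`2 M min(|s|, |t - t'|)^β`; since `|arg z| ≤ π ‖1 - z‖`, it is controlled by
  `∫ min(‖1 - z‖, δ)^β ‖1 - z‖^{-2-γ} dz = c δ^{β-γ}`, where `δ = |t - t'|`.
-/

section RadialKernels

variable {E : Type*} [NormedAddCommGroup E]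

lemma exists_abs_one_sub_rpow_le (b : ℝ) :
    ∃ K : ℝ, 0 ≤ K ∧ ∀ r ∈ Set.Icc (1 / 2 : ℝ) (3 / 2), |1 - r ^ (-b)| ≤ K * |1 - r| := by
  have hsmooth : ContDiffOn ℝ 1 (fun r : ℝ => r ^ (-b)) (Set.Icc (1 / 2) (3 / 2)) :=
    contDiffOn_id.rpow_const_of_ne fun r hr => by
      have := hr.1
      simp only [id_eq]
      linarith
  obtain ⟨K, hK⟩ := hsmooth.exists_lipschitzOnWith one_ne_zero (convex_Icc _ _) isCompact_Icc
  refine ⟨K, K.2, fun r hr => ?_⟩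
  simpa [Real.dist_eq] using hK.dist_le_mul 1 (by norm_num) r hr

lemma norm_sub_rpow_neg_le {e x : E} (he : ‖e‖ = 1) (hx : 1 / 2 ≤ ‖e - x‖) {a : ℝ} (ha : 0 ≤ a) :
    ‖e - x‖ ^ (-a) ≤ 5 ^ a * (1 + ‖x‖) ^ (-a) := by
  have htriangle : ‖x‖ - ‖e‖ ≤ ‖e - x‖ := norm_sub_rev e x ▸ norm_sub_norm_le x e
  calc ‖e - x‖ ^ (-a) ≤ ((1 + ‖x‖) / 5) ^ (-a) :=
        Real.rpow_le_rpow_of_nonpos (by positivity) (by linarith) (neg_nonpos.2 ha)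
    _ = 5 ^ a * (1 + ‖x‖) ^ (-a) := by
        rw [Real.div_rpow (by positivity) (by norm_num), Real.rpow_neg (by norm_num : (0 : ℝ) ≤ 5),
          div_inv_eq_mul, mul_comm]

lemma exists_abs_one_sub_norm_rpow_mul_le {e : E} (he : ‖e‖ = 1) (b : ℝ) {a : ℝ} (ha : 0 ≤ a) :
    ∃ C : ℝ, ∀ x : E, |1 - ‖x‖ ^ (-b)| * ‖e - x‖ ^ (-a) ≤
      C * (min ‖e - x‖ 1 * ‖e - x‖ ^ (-a) + (1 + ‖x‖ ^ (-b)) * (1 + ‖x‖) ^ (-a)) := by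
  obtain ⟨K, hK0, hK⟩ := exists_abs_one_sub_rpow_le b
  refine ⟨K + 5 ^ a, fun x => ?_⟩
  set near := min ‖e - x‖ 1 * ‖e - x‖ ^ (-a) with hnear
  set far := (1 + ‖x‖ ^ (-b)) * (1 + ‖x‖) ^ (-a)
  have hnear0 : 0 ≤ near := by positivity
  have hfar0 : 0 ≤ far := by positivity
  have h5 : (0 : ℝ) ≤ 5 ^ a := by positivity
  rcases le_total ‖e - x‖ (1 / 2) with hx | hx
  · have hdist : |1 - ‖x‖| ≤ ‖e - x‖ := he ▸ abs_norm_sub_norm_le e x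
    obtain ⟨hlow, hupp⟩ := abs_le.1 hdist
    calc |1 - ‖x‖ ^ (-b)| * ‖e - x‖ ^ (-a) ≤ K * ‖e - x‖ * ‖e - x‖ ^ (-a) := by
          gcongr
          exact (hK ‖x‖ ⟨by linarith, by linarith⟩).trans (by gcongr)
      _ = K * near := by rw [hnear, min_eq_left (by linarith), mul_assoc]
      _ ≤ (K + 5 ^ a) * (near + far) := by gcongr <;> linarith
  · have hweight : |1 - ‖x‖ ^ (-b)| ≤ 1 + ‖x‖ ^ (-b) := by
      have hpow : 0 ≤ ‖x‖ ^ (-b) := by positivity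
      exact abs_le.2 ⟨by linarith, by linarith⟩
    calc |1 - ‖x‖ ^ (-b)| * ‖e - x‖ ^ (-a)
        ≤ (1 + ‖x‖ ^ (-b)) * (5 ^ a * (1 + ‖x‖) ^ (-a)) := by
          gcongr
          exact norm_sub_rpow_neg_le he hx ha
      _ = 5 ^ a * far := by ring
      _ ≤ (K + 5 ^ a) * (near + far) := by gcongr <;> linarith

variable [NormedSpace ℝ E]

lemma min_norm_smul_rpow_mul_norm_smul_rpow {β a δ : ℝ} (hδ : 0 < δ) (x : E) :
    min ‖δ • x‖ δ ^ β * ‖δ • x‖ ^ (-a) = δ ^ (β - a) * (min ‖x‖ 1 ^ β * ‖x‖ ^ (-a)) := by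
  have hmin : min ‖δ • x‖ δ = δ * min ‖x‖ 1 := by
    rw [norm_smul, Real.norm_of_nonneg hδ.le, mul_min_of_nonneg _ _ hδ.le, mul_one]
  rw [hmin, norm_smul, Real.norm_of_nonneg hδ.le, Real.mul_rpow hδ.le (by positivity),
    Real.mul_rpow hδ.le (norm_nonneg x), sub_eq_add_neg, Real.rpow_add hδ]
  ring

variable [FiniteDimensional ℝ E] [MeasurableSpace E] [BorelSpace E]
  (μ : Measure E) [μ.IsAddHaarMeasure]

lemma integral_min_norm_rpow_mul_norm_rpow (β a : ℝ) {δ : ℝ} (hδ : 0 < δ) :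
    ∫ x : E, min ‖x‖ δ ^ β * ‖x‖ ^ (-a) ∂μ =
      δ ^ (Module.finrank ℝ E + β - a) * ∫ x : E, min ‖x‖ 1 ^ β * ‖x‖ ^ (-a) ∂μ := by
  have hscale := Measure.integral_comp_smul μ (fun x : E => min ‖x‖ δ ^ β * ‖x‖ ^ (-a)) δ
  simp only [min_norm_smul_rpow_mul_norm_smul_rpow hδ, integral_const_mul, smul_eq_mul] at hscale
  rw [abs_of_pos (by positivity), eq_inv_mul_iff_mul_eq₀ (by positivity)] at hscale
  rw [← hscale, ← mul_assoc, ← Real.rpow_natCast, ← Real.rpow_add hδ, add_sub_assoc]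

variable [Nontrivial E]

lemma integrable_min_norm_rpow {p q : ℝ} (hp : -(Module.finrank ℝ E : ℝ) < p)
    (hq : q < -(Module.finrank ℝ E : ℝ)) :
    Integrable (fun x : E => min (‖x‖ ^ p) (‖x‖ ^ q)) μ := by
  rw [integrable_fun_norm_addHaar μ (f := fun r : ℝ => min (r ^ p) (r ^ q)),
    ← Set.Ioc_union_Ioi_eq_Ioi zero_le_one]
  have hpow : ∀ r : ℝ, 0 < r → ∀ s : ℝ,
      r ^ (Module.finrank ℝ E - 1) * r ^ s = r ^ ((Module.finrank ℝ E : ℝ) - 1 + s) := by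
    intro r hr s
    rw [← Real.rpow_natCast, ← Real.rpow_add hr, Nat.cast_pred Module.finrank_pos]
  have hmeas : Measurable fun r : ℝ =>
    r ^ (Module.finrank ℝ E - 1) • min (r ^ p) (r ^ q) := by fun_prop
  refine IntegrableOn.union ?_ ?_
  · have hint : IntegrableOn (fun r : ℝ => r ^ ((Module.finrank ℝ E : ℝ) - 1 + p)) (Set.Ioc 0 1) :=
      (intervalIntegrable_iff_integrableOn_Ioc_of_le zero_le_one).1
        (intervalIntegral.intervalIntegrable_rpow' (by linarith))
    refine hint.mono' hmeas.aestronglyMeasurable ?_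
    filter_upwards [ae_restrict_mem measurableSet_Ioc] with r ⟨hr, _⟩
    rw [smul_eq_mul, Real.norm_of_nonneg (by positivity), ← hpow r hr]
    gcongr
    exact min_le_left _ _
  · refine (integrableOn_Ioi_rpow_of_lt (a := (Module.finrank ℝ E : ℝ) - 1 + q) (by linarith)
      zero_lt_one).mono' hmeas.aestronglyMeasurable ?_
    filter_upwards [ae_restrict_mem measurableSet_Ioi] with r hr
    have hr : 0 < r := zero_lt_one.trans hr
    rw [smul_eq_mul, Real.norm_of_nonneg (by positivity), ← hpow r hr]
    gcongr
    exact min_le_right _ _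

lemma integrable_min_norm_rpow_mul_norm_rpow {β a δ : ℝ} (hβ : 0 < β)
    (ha : Module.finrank ℝ E < a) (haβ : a < Module.finrank ℝ E + β) (hδ : 0 < δ) :
    Integrable (fun x : E => min ‖x‖ δ ^ β * ‖x‖ ^ (-a)) μ := by
  rw [← integrable_comp_smul_iff μ _ hδ.ne']
  simp only [min_norm_smul_rpow_mul_norm_smul_rpow hδ]
  refine Integrable.const_mul ?_ _
  refine (integrable_min_norm_rpow μ (p := β - a) (q := -a) (by linarith) (by linarith)).mono'
    (by fun_prop) ?_
  filter_upwards [Measure.ae_ne μ 0] with x hx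
  have hx : 0 < ‖x‖ := norm_pos_iff.2 hx
  rw [Real.norm_of_nonneg (by positivity), sub_eq_add_neg, Real.rpow_add hx]
  refine le_min (by gcongr; exact min_le_left _ _) (mul_le_of_le_one_left (by positivity) ?_)
  exact Real.rpow_le_one (by positivity) (min_le_right _ _) hβ.le

lemma integrable_norm_rpow_mul_one_add_norm_rpow {a c : ℝ} (ha : 0 ≤ a)
    (hc : c < Module.finrank ℝ E) (hac : Module.finrank ℝ E < a + c) :
    Integrable (fun x : E => ‖x‖ ^ (-c) * (1 + ‖x‖) ^ (-a)) μ := by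
  refine (integrable_min_norm_rpow μ (p := -c) (q := -(a + c)) (by linarith) (by linarith)).mono'
    (by fun_prop) ?_
  filter_upwards [Measure.ae_ne μ 0] with x hx
  have hx : 0 < ‖x‖ := norm_pos_iff.2 hx
  rw [Real.norm_of_nonneg (by positivity), neg_add_rev, Real.rpow_add hx]
  refine le_min (mul_le_of_le_one_right (by positivity) ?_) ?_
  · exact Real.rpow_le_one_of_one_le_of_nonpos (by linarith) (neg_nonpos.2 ha)
  · gcongr ?_ * ?_
    exact Real.rpow_le_rpow_of_nonpos hx (by linarith) (neg_nonpos.2 ha)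

lemma integrable_abs_one_sub_norm_rpow_mul_norm_sub_rpow {e : E} (he : ‖e‖ = 1) {a b : ℝ}
    (ha : Module.finrank ℝ E < a) (ha' : a < Module.finrank ℝ E + 1)
    (hb : b < Module.finrank ℝ E) (hab : Module.finrank ℝ E < a + b) :
    Integrable (fun x : E => |1 - ‖x‖ ^ (-b)| * ‖e - x‖ ^ (-a)) μ := by
  have hd : (0 : ℝ) < Module.finrank ℝ E := mod_cast Module.finrank_pos
  obtain ⟨C, hC⟩ := exists_abs_one_sub_norm_rpow_mul_le he b (hd.trans ha).le
  have hnear := (integrable_min_norm_rpow_mul_norm_rpow μ one_pos ha ha' one_pos).comp_sub_left e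
  have hfar : Integrable (fun x : E => (1 + ‖x‖ ^ (-b)) * (1 + ‖x‖) ^ (-a)) μ := by
    have h₀ := integrable_norm_rpow_mul_one_add_norm_rpow μ (c := 0) (hd.trans ha).le hd
      (by linarith)
    have h_b := integrable_norm_rpow_mul_one_add_norm_rpow μ (hd.trans ha).le hb hab
    refine (h₀.add h_b).congr (.of_forall fun x => ?_)
    simp [add_mul]
  refine ((hnear.add hfar).const_mul C).mono' (by fun_prop) (.of_forall fun x => ?_)
  rw [Real.norm_of_nonneg (by positivity)]
  simpa only [Real.rpow_one, Pi.add_apply] using hC x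

end RadialKernels

section HolderClasses

variable {F : Type*} [NormedAddCommGroup F] {β M : ℝ} {h : ℝ → F}

/-- The function `h` lies in `C^{0,β}(ℝ)`, with `M` bounding both its supremum norm and its
`β`-Hölder seminorm. -/
structure HolderBound (β M : ℝ) (h : ℝ → F) : Prop where
  norm_le : ∀ t, ‖h t‖ ≤ M
  norm_sub_le : ∀ t t', ‖h t - h t'‖ ≤ M * |t - t'| ^ β

namespace HolderBound

lemma nonneg (hh : HolderBound β M h) : 0 ≤ M :=
  (norm_nonneg _).trans (hh.norm_le 0)

lemma continuous (hh : HolderBound β M h) (hβ : 0 < β) : Continuous h := by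
  lift M to NNReal using hh.nonneg
  lift β to NNReal using hβ.le
  have hholder : HolderWith M β h := fun t t' => by
    rw [edist_dist, edist_dist, ENNReal.ofReal_rpow_of_nonneg dist_nonneg β.coe_nonneg,
      ← ENNReal.ofReal_coe_nnreal, ← ENNReal.ofReal_mul M.coe_nonneg, dist_eq_norm, Real.dist_eq]
    exact ENNReal.ofReal_le_ofReal (hh.norm_sub_le t t')
  exact hholder.continuous (mod_cast hβ)

lemma mono (hh : HolderBound β M h) {N : ℝ} (hMN : M ≤ N) : HolderBound β N h :=
  ⟨fun t => (hh.norm_le t).trans hMN, fun t t' => (hh.norm_sub_le t t').trans (by gcongr)⟩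

lemma of_exponent_le (hh : HolderBound β M h) {α : ℝ} (hα : 0 ≤ α) (hαβ : α ≤ β) :
    HolderBound α (2 * M) h := by
  have hM := hh.nonneg
  refine ⟨fun t => (hh.norm_le t).trans (by linarith), fun t t' => ?_⟩
  rcases le_total |t - t'| 1 with hle | hle
  · calc ‖h t - h t'‖ ≤ M * |t - t'| ^ β := hh.norm_sub_le t t'
      _ ≤ M * |t - t'| ^ α := by
          gcongr ?_ * ?_
          exact Real.rpow_le_rpow_of_exponent_ge' (abs_nonneg _) hle hα hαβ
      _ ≤ 2 * M * |t - t'| ^ α := by gcongr; linarith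
  · calc ‖h t - h t'‖ ≤ ‖h t‖ + ‖h t'‖ := _root_.norm_sub_le _ _
      _ ≤ 2 * M * 1 := by linarith [hh.norm_le t, hh.norm_le t']
      _ ≤ 2 * M * |t - t'| ^ α := by gcongr; exact Real.one_le_rpow hle hα

lemma norm_sub_add_le (hh : HolderBound β M h) (t s : ℝ) : ‖h t - h (t + s)‖ ≤ M * |s| ^ β := by
  simpa using hh.norm_sub_le t (t + s)

lemma norm_sub_add_sub_sub_add_le (hh : HolderBound β M h) (t t' s : ℝ) :
    ‖(h t - h (t + s)) - (h t' - h (t' + s))‖ ≤ 2 * M * min |s| |t - t'| ^ β := by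
  rcases le_total |s| |t - t'| with hle | hle
  · rw [min_eq_left hle]
    linarith [_root_.norm_sub_le (h t - h (t + s)) (h t' - h (t' + s)),
      hh.norm_sub_add_le t s, hh.norm_sub_add_le t' s]
  · have hshift := hh.norm_sub_le (t + s) (t' + s)
    rw [add_sub_add_right_eq_sub] at hshift
    rw [min_eq_right hle, sub_sub_sub_comm]
    linarith [_root_.norm_sub_le (h t - h t') (h (t + s) - h (t' + s)), hh.norm_sub_le t t']

end HolderBound

variable [NormedSpace ℝ F] {m : ℕ} {f : ℝ → F}

/-- The function `f` lies in `C^{m,β}(ℝ)`, with `M` bounding the supremum norms of its derivatives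
up to order `m` and the `β`-Hölder seminorm of the last one. -/
structure CkHolderBound (m : ℕ) (β M : ℝ) (f : ℝ → F) : Prop where
  contDiff : ContDiff ℝ (m : ℕ∞) f
  norm_iteratedDeriv_le : ∀ i ≤ m, ∀ t, ‖iteratedDeriv i f t‖ ≤ M
  norm_iteratedDeriv_sub_le : ∀ t t',
    ‖iteratedDeriv m f t - iteratedDeriv m f t'‖ ≤ M * |t - t'| ^ β

namespace CkHolderBound

lemma nonneg (hf : CkHolderBound m β M f) : 0 ≤ M :=
  (norm_nonneg _).trans (hf.norm_iteratedDeriv_le 0 m.zero_le 0)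

lemma mono (hf : CkHolderBound m β M f) {N : ℝ} (hMN : M ≤ N) : CkHolderBound m β N f :=
  ⟨hf.contDiff, fun i hi t => (hf.norm_iteratedDeriv_le i hi t).trans hMN,
    fun t t' => (hf.norm_iteratedDeriv_sub_le t t').trans (by gcongr)⟩

lemma hasDerivAt_iteratedDeriv (hf : CkHolderBound m β M f) {i : ℕ} (hi : i < m) (t : ℝ) :
    HasDerivAt (iteratedDeriv i f) (iteratedDeriv (i + 1) f t) t := by
  rw [iteratedDeriv_succ]
  exact (hf.contDiff.differentiable_iteratedDeriv i (mod_cast hi) t).hasDerivAt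

lemma holderBound_iteratedDeriv (hf : CkHolderBound m β M f) (hβ0 : 0 ≤ β) (hβ1 : β ≤ 1)
    {i : ℕ} (hi : i ≤ m) : HolderBound β (2 * M) (iteratedDeriv i f) := by
  rcases hi.eq_or_lt with rfl | hlt
  · exact HolderBound.mono ⟨hf.norm_iteratedDeriv_le i le_rfl, hf.norm_iteratedDeriv_sub_le⟩
      (by linarith [hf.nonneg])
  · have hlip : HolderBound 1 M (iteratedDeriv i f) := by
      refine ⟨hf.norm_iteratedDeriv_le i hi, fun t t' => ?_⟩
      rw [Real.rpow_one, ← Real.norm_eq_abs]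
      refine convex_univ.norm_image_sub_le_of_norm_hasDerivWithin_le
        (fun x _ => (hf.hasDerivAt_iteratedDeriv hlt x).hasDerivWithinAt)
        (fun x _ => hf.norm_iteratedDeriv_le (i + 1) hlt x) trivial trivial
    exact hlip.of_exponent_le hβ0 hβ1

end CkHolderBound

lemma iteratedDeriv_eq_of_forall_hasDerivAt {g : ℕ → ℝ → F}
    (hg : ∀ i < m, ∀ t, HasDerivAt (g i) (g (i + 1) t) t) {i : ℕ} (hi : i ≤ m) :
    iteratedDeriv i (g 0) = g i := by
  induction i with
  | zero => exact iteratedDeriv_zero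
  | succ i ih =>
    rw [iteratedDeriv_succ, ih (Nat.le_of_succ_le hi)]
    exact funext fun t => (hg i hi t).deriv

lemma ckHolderBound_of_forall_hasDerivAt {g : ℕ → ℝ → F} (hβ : 0 < β)
    (hg : ∀ i < m, ∀ t, HasDerivAt (g i) (g (i + 1) t) t)
    (hbound : ∀ i ≤ m, HolderBound β M (g i)) : CkHolderBound m β M (g 0) := by
  have hiter : ∀ i ≤ m, iteratedDeriv i (g 0) = g i :=
    fun i hi => iteratedDeriv_eq_of_forall_hasDerivAt hg hi
  refine ⟨?_, fun i hi => hiter i hi ▸ (hbound i hi).norm_le,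
    hiter m le_rfl ▸ (hbound m le_rfl).norm_sub_le⟩
  refine contDiff_nat_iff_iteratedDeriv.2 ⟨fun i hi => ?_, fun i hi t => ?_⟩
  · exact hiter i hi ▸ (hbound i hi).continuous hβ
  · exact hiter i hi.le ▸ (hg i hi t).differentiableAt

end HolderClasses

section AngularOperator

lemma abs_arg_le_pi_mul_norm_one_sub (z : ℂ) : |z.arg| ≤ Real.pi * ‖1 - z‖ := by
  rcases eq_or_ne z 0 with rfl | hz
  · simpa using Real.pi_pos.le
  have hr : 0 < ‖z‖ := norm_pos_iff.2 hz
  set w : ℂ := (‖z‖⁻¹ : ℝ) * z with hw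
  have hw1 : ‖w‖ = 1 := by
    rw [hw, norm_mul, Complex.norm_real, norm_inv, norm_norm, inv_mul_cancel₀ hr.ne']
  have hzw : z = ‖z‖ * w := by
    rw [hw, ← mul_assoc, ← Complex.ofReal_mul, mul_inv_cancel₀ hr.ne', Complex.ofReal_one, one_mul]
  have hradial : ‖z - w‖ ≤ ‖1 - z‖ := by
    calc ‖z - w‖ = ‖((‖z‖ - 1 : ℝ) : ℂ) * w‖ := by
          conv_lhs => rw [hzw]
          push_cast
          ring_nf
      _ = |‖(1 : ℂ)‖ - ‖z‖| := by
          rw [norm_mul, hw1, mul_one, Complex.norm_real, Real.norm_eq_abs, norm_one, abs_sub_comm]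
      _ ≤ ‖1 - z‖ := abs_norm_sub_norm_le 1 z
  calc |z.arg| = |w.arg| := by rw [hw, Complex.arg_real_mul z (inv_pos.2 hr)]
    _ = InnerProductGeometry.angle 1 w :=
        (Complex.angle_one_left (norm_ne_zero_iff.1 (hw1 ▸ one_ne_zero))).symm
    _ ≤ Real.pi / 2 * ‖1 - w‖ := Complex.angle_le_mul_norm_sub norm_one hw1
    _ ≤ Real.pi / 2 * (‖1 - z‖ + ‖z - w‖) := by gcongr; exact norm_sub_le_norm_sub_add_norm_sub ..
    _ ≤ Real.pi * ‖1 - z‖ := by nlinarith [Real.pi_pos]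

lemma min_abs_arg_le (z : ℂ) {δ : ℝ} (hδ : 0 ≤ δ) :
    min |z.arg| δ ≤ Real.pi * min ‖1 - z‖ δ := by
  rw [mul_min_of_nonneg _ _ Real.pi_pos.le]
  exact min_le_min (abs_arg_le_pi_mul_norm_one_sub z)
    (le_mul_of_one_le_left hδ (by linarith [Real.pi_gt_three]))

lemma abs_arg_le_pi_mul_min (z : ℂ) : |z.arg| ≤ Real.pi * min ‖1 - z‖ 1 := by
  rw [mul_min_of_nonneg _ _ Real.pi_pos.le, mul_one]
  exact le_min (abs_arg_le_pi_mul_norm_one_sub z) (Complex.abs_arg_le_pi z)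

/-- The kernel `‖1 - z‖^{-2-γ}` of the fractional Laplacian on `ℂ ≃ ℝ²`, based at the point `1` and
damped by the `β`-Hölder modulus of continuity at distance `‖1 - z‖`, saturated at `δ`. -/
def truncKernel (β γ δ : ℝ) (z : ℂ) : ℝ := min ‖1 - z‖ δ ^ β * ‖1 - z‖ ^ (-(2 + γ))

/-- The kernel `‖1 - z‖^{-2-γ}` damped by the variation of the radial weight `‖z‖^{-b}` between `1`
and `z`. -/
def weightKernel (b γ : ℝ) (z : ℂ) : ℝ := |1 - ‖z‖ ^ (-b)| * ‖1 - z‖ ^ (-(2 + γ))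

variable {b β γ : ℝ}

lemma truncKernel_nonneg {δ : ℝ} (hδ : 0 ≤ δ) (z : ℂ) : 0 ≤ truncKernel β γ δ z := by
  unfold truncKernel
  positivity

lemma weightKernel_nonneg (z : ℂ) : 0 ≤ weightKernel b γ z := by
  unfold weightKernel
  positivity

lemma integrable_truncKernel {δ : ℝ} (hγ : 0 < γ) (hγβ : γ < β) (hδ : 0 < δ) :
    Integrable (truncKernel β γ δ) :=
  (integrable_min_norm_rpow_mul_norm_rpow (volume : Measure ℂ) (hγ.trans hγβ)
    (by rw [Complex.finrank_real_complex]; push_cast; linarith)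
    (by rw [Complex.finrank_real_complex]; push_cast; linarith) hδ).comp_sub_left 1

lemma integral_truncKernel {δ : ℝ} (hδ : 0 < δ) :
    ∫ z, truncKernel β γ δ z = δ ^ (β - γ) * ∫ z, truncKernel β γ 1 z := by
  have hshift (ε : ℝ) : ∫ z, truncKernel β γ ε z = ∫ z : ℂ, min ‖z‖ ε ^ β * ‖z‖ ^ (-(2 + γ)) :=
    integral_sub_left_eq_self (fun z : ℂ => min ‖z‖ ε ^ β * ‖z‖ ^ (-(2 + γ))) volume 1
  rw [hshift, hshift, integral_min_norm_rpow_mul_norm_rpow volume _ _ hδ,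
    Complex.finrank_real_complex]
  congr 2
  push_cast
  ring

lemma integrable_weightKernel (hb : b ∈ Set.Ioo (-γ) 2) (hγ : γ ∈ Set.Ioo (0 : ℝ) 1) :
    Integrable (weightKernel b γ) := by
  obtain ⟨hγb, hb2⟩ := hb
  obtain ⟨hγ0, hγ1⟩ := hγ
  apply integrable_abs_one_sub_norm_rpow_mul_norm_sub_rpow volume norm_one <;>
    rw [Complex.finrank_real_complex] <;> push_cast <;> linarith

variable {F : Type*} [NormedAddCommGroup F] [NormedSpace ℝ F] {M : ℝ} {h : ℝ → F}

/-- The singular integrand of the fractional Laplacian of `r e^{is} ↦ r^{-b} h(s)` at `e^{it}`,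
with the integration variable rotated by `e^{-it}` so that the singularity sits at `1`. -/
def angularIntegrand (b γ : ℝ) (h : ℝ → F) (t : ℝ) (z : ℂ) : F :=
  ‖1 - z‖ ^ (-(2 + γ)) • (h t - ‖z‖ ^ (-b) • h (t + z.arg))

/-- The operator taking the angular part `h` of a `(-b)`-homogeneous function on the plane to the
angular part of its fractional Laplacian of order `γ`, up to the constant `c_γ`. -/
def angularFracLap (b γ : ℝ) (h : ℝ → F) (t : ℝ) : F := ∫ z : ℂ, angularIntegrand b γ h t z

/-- The factor by which `angularFracLap b γ` increases a `β`-Hölder bound. -/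
def angularConst (b β γ : ℝ) : ℝ :=
  2 * (Real.pi ^ β * (∫ z, truncKernel β γ 1 z) + ∫ z, weightKernel b γ z)

lemma angularConst_nonneg : 0 ≤ angularConst b β γ := by
  have htrunc : 0 ≤ ∫ z, truncKernel β γ 1 z := integral_nonneg (truncKernel_nonneg zero_le_one)
  have hweight : 0 ≤ ∫ z, weightKernel b γ z := integral_nonneg weightKernel_nonneg
  unfold angularConst
  positivity

lemma aestronglyMeasurable_angularIntegrand (hh : Continuous h) (t : ℝ) :
    AEStronglyMeasurable (angularIntegrand b γ h t) volume := by
  have hrot : StronglyMeasurable fun z : ℂ => h (t + z.arg) :=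
    hh.comp_stronglyMeasurable (Complex.measurable_arg.const_add t).stronglyMeasurable
  have hkernel : StronglyMeasurable fun z : ℂ => ‖1 - z‖ ^ (-(2 + γ)) :=
    Measurable.stronglyMeasurable (by fun_prop)
  have hradial : StronglyMeasurable fun z : ℂ => ‖z‖ ^ (-b) :=
    Measurable.stronglyMeasurable (by fun_prop)
  exact (hkernel.smul (stronglyMeasurable_const.sub (hradial.smul hrot))).aestronglyMeasurable

lemma angularIntegrand_eq_add (t : ℝ) (z : ℂ) :
    angularIntegrand b γ h t z = ‖1 - z‖ ^ (-(2 + γ)) • (h t - h (t + z.arg)) +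
      ((1 - ‖z‖ ^ (-b)) * ‖1 - z‖ ^ (-(2 + γ))) • h (t + z.arg) := by
  unfold angularIntegrand
  module

lemma norm_weight_smul_le {v : F} {N : ℝ} (hv : ‖v‖ ≤ N) (z : ℂ) :
    ‖((1 - ‖z‖ ^ (-b)) * ‖1 - z‖ ^ (-(2 + γ))) • v‖ ≤ N * weightKernel b γ z := by
  have hkernel : 0 ≤ ‖1 - z‖ ^ (-(2 + γ)) := by positivity
  rw [norm_smul, norm_mul, Real.norm_of_nonneg hkernel, Real.norm_eq_abs, mul_comm]
  exact mul_le_mul_of_nonneg_right hv (weightKernel_nonneg z)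

lemma norm_kernel_smul_le {v : F} {δ ρ : ℝ} {z : ℂ} (hβ : 0 ≤ β) (hM : 0 ≤ M) (hρ : 0 ≤ ρ)
    (hv : ‖v‖ ≤ M * ρ ^ β) (hρδ : ρ ≤ Real.pi * min ‖1 - z‖ δ) (hδ : 0 ≤ δ) :
    ‖‖1 - z‖ ^ (-(2 + γ)) • v‖ ≤ M * (Real.pi ^ β * truncKernel β γ δ z) := by
  have hkernel : 0 ≤ ‖1 - z‖ ^ (-(2 + γ)) := by positivity
  have hmin : 0 ≤ min ‖1 - z‖ δ := by positivity
  rw [norm_smul, Real.norm_of_nonneg hkernel]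
  calc ‖1 - z‖ ^ (-(2 + γ)) * ‖v‖
      ≤ ‖1 - z‖ ^ (-(2 + γ)) * (M * (Real.pi * min ‖1 - z‖ δ) ^ β) := by
        gcongr
        exact hv.trans (by gcongr)
    _ = M * (Real.pi ^ β * truncKernel β γ δ z) := by
        rw [Real.mul_rpow Real.pi_pos.le hmin, truncKernel]
        ring

lemma HolderBound.norm_angularIntegrand_le (hh : HolderBound β M h) (hβ : 0 ≤ β) (t : ℝ) (z : ℂ) :
    ‖angularIntegrand b γ h t z‖ ≤
      M * (Real.pi ^ β * truncKernel β γ 1 z + weightKernel b γ z) := by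
  rw [angularIntegrand_eq_add, mul_add]
  exact norm_add_le_of_le
    (norm_kernel_smul_le hβ hh.nonneg (abs_nonneg _) (hh.norm_sub_add_le t z.arg)
      (abs_arg_le_pi_mul_min z) zero_le_one)
    (norm_weight_smul_le (hh.norm_le _) z)

lemma HolderBound.norm_angularIntegrand_sub_le (hh : HolderBound β M h) (hβ : 0 ≤ β) {α N : ℝ}
    (hα : HolderBound α N h) (t t' : ℝ) (z : ℂ) :
    ‖angularIntegrand b γ h t z - angularIntegrand b γ h t' z‖ ≤
      2 * M * (Real.pi ^ β * truncKernel β γ |t - t'| z) +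
        N * |t - t'| ^ α * weightKernel b γ z := by
  rw [angularIntegrand_eq_add, angularIntegrand_eq_add, add_sub_add_comm, ← smul_sub, ← smul_sub]
  refine norm_add_le_of_le ?_ (norm_weight_smul_le ?_ z)
  · exact norm_kernel_smul_le hβ (by linarith [hh.nonneg]) (by positivity)
      (hh.norm_sub_add_sub_sub_add_le t t' z.arg) (min_abs_arg_le z (abs_nonneg _)) (abs_nonneg _)
  · simpa only [add_sub_add_right_eq_sub] using hα.norm_sub_le (t + z.arg) (t' + z.arg)

lemma integrable_angularIntegrand_bound (hb : b ∈ Set.Ioo (-γ) 2) (hγ : γ ∈ Set.Ioo (0 : ℝ) 1)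
    (hγβ : γ < β) (M : ℝ) :
    Integrable fun z => M * (Real.pi ^ β * truncKernel β γ 1 z + weightKernel b γ z) :=
  (((integrable_truncKernel hγ.1 hγβ one_pos).const_mul _).add
    (integrable_weightKernel hb hγ)).const_mul M

lemma HolderBound.integrable_angularIntegrand (hh : HolderBound β M h)
    (hb : b ∈ Set.Ioo (-γ) 2) (hγ : γ ∈ Set.Ioo (0 : ℝ) 1) (hγβ : γ < β) (t : ℝ) :
    Integrable (angularIntegrand b γ h t) :=
  have hβ : 0 < β := hγ.1.trans hγβ
  (integrable_angularIntegrand_bound hb hγ hγβ M).mono'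
    (aestronglyMeasurable_angularIntegrand (hh.continuous hβ) t)
    (.of_forall (hh.norm_angularIntegrand_le hβ.le t))

lemma HolderBound.norm_angularFracLap_le (hh : HolderBound β M h)
    (hb : b ∈ Set.Ioo (-γ) 2) (hγ : γ ∈ Set.Ioo (0 : ℝ) 1) (hγβ : γ < β) (t : ℝ) :
    ‖angularFracLap b γ h t‖ ≤ angularConst b β γ * M := by
  calc ‖angularFracLap b γ h t‖
      ≤ ∫ z, M * (Real.pi ^ β * truncKernel β γ 1 z + weightKernel b γ z) :=
        norm_integral_le_of_norm_le (integrable_angularIntegrand_bound hb hγ hγβ M)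
          (.of_forall (hh.norm_angularIntegrand_le (hγ.1.trans hγβ).le t))
    _ = angularConst b β γ / 2 * M := by
        rw [integral_const_mul, integral_add
          ((integrable_truncKernel hγ.1 hγβ one_pos).const_mul _) (integrable_weightKernel hb hγ),
          integral_const_mul, angularConst]
        ring
    _ ≤ angularConst b β γ * M := by
        have hM := hh.nonneg
        gcongr
        exact half_le_self angularConst_nonneg

lemma HolderBound.norm_angularFracLap_sub_le (hh : HolderBound β M h)
    (hb : b ∈ Set.Ioo (-γ) 2) (hγ : γ ∈ Set.Ioo (0 : ℝ) 1) (hγβ : γ < β) (t t' : ℝ) :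
    ‖angularFracLap b γ h t - angularFracLap b γ h t'‖ ≤
      angularConst b β γ * M * |t - t'| ^ (β - γ) := by
  have hM := hh.nonneg
  rcases eq_or_ne t t' with rfl | hne
  · rw [sub_self, norm_zero]
    have := angularConst_nonneg (b := b) (β := β) (γ := γ)
    positivity
  have hδ : 0 < |t - t'| := abs_pos.2 (sub_ne_zero.2 hne)
  have hβ : 0 ≤ β := (hγ.1.trans hγβ).le
  have hholder : HolderBound (β - γ) (2 * M) h :=
    hh.of_exponent_le (sub_nonneg.2 hγβ.le) (by linarith [hγ.1])
  have htrunc : Integrable fun z =>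
      2 * M * (Real.pi ^ β * truncKernel β γ |t - t'| z) :=
    ((integrable_truncKernel hγ.1 hγβ hδ).const_mul _).const_mul _
  have hweight : Integrable fun z => 2 * M * |t - t'| ^ (β - γ) * weightKernel b γ z :=
    (integrable_weightKernel hb hγ).const_mul _
  calc ‖angularFracLap b γ h t - angularFracLap b γ h t'‖
      = ‖∫ z, (angularIntegrand b γ h t z - angularIntegrand b γ h t' z)‖ := by
        rw [angularFracLap, angularFracLap, integral_sub
          (hh.integrable_angularIntegrand hb hγ hγβ t)
          (hh.integrable_angularIntegrand hb hγ hγβ t')]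
    _ ≤ ∫ z, (2 * M * (Real.pi ^ β * truncKernel β γ |t - t'| z) +
          2 * M * |t - t'| ^ (β - γ) * weightKernel b γ z) :=
        norm_integral_le_of_norm_le (htrunc.add hweight)
          (.of_forall (hh.norm_angularIntegrand_sub_le hβ hholder t t'))
    _ = angularConst b β γ * M * |t - t'| ^ (β - γ) := by
        rw [integral_add htrunc hweight, integral_const_mul, integral_const_mul,
          integral_const_mul, integral_truncKernel hδ, angularConst]
        ring

lemma HolderBound.angularFracLap (hh : HolderBound β M h)
    (hb : b ∈ Set.Ioo (-γ) 2) (hγ : γ ∈ Set.Ioo (0 : ℝ) 1) (hγβ : γ < β) :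
    HolderBound (β - γ) (angularConst b β γ * M) (angularFracLap b γ h) :=
  ⟨hh.norm_angularFracLap_le hb hγ hγβ, hh.norm_angularFracLap_sub_le hb hγ hγβ⟩

lemma hasDerivAt_angularFracLap {h' : ℝ → F} {N : ℝ} (hh : HolderBound β M h)
    (hh' : HolderBound β N h') (hderiv : ∀ t, HasDerivAt h (h' t) t)
    (hb : b ∈ Set.Ioo (-γ) 2) (hγ : γ ∈ Set.Ioo (0 : ℝ) 1) (hγβ : γ < β) (t : ℝ) :
    HasDerivAt (angularFracLap b γ h) (angularFracLap b γ h' t) t := by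
  have hβ : 0 < β := hγ.1.trans hγβ
  refine (hasDerivAt_integral_of_dominated_loc_of_deriv_le (F := angularIntegrand b γ h)
    (F' := angularIntegrand b γ h') Filter.univ_mem
    (.of_forall (aestronglyMeasurable_angularIntegrand (hh.continuous hβ)))
    (hh.integrable_angularIntegrand hb hγ hγβ t)
    (aestronglyMeasurable_angularIntegrand (hh'.continuous hβ) t)
    (.of_forall fun z s _ => hh'.norm_angularIntegrand_le hβ.le s z)
    (integrable_angularIntegrand_bound hb hγ hγβ N) (.of_forall fun z s _ => ?_)).2
  have hrot : HasDerivAt (fun s => h (s + z.arg)) (h' (s + z.arg)) s :=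
    (hderiv (s + z.arg)).comp_add_const s z.arg
  exact ((hderiv s).sub (hrot.const_smul _)).const_smul _

lemma CkHolderBound.angularFracLap {m : ℕ} {f : ℝ → F} (hf : CkHolderBound m β M f)
    (hb : b ∈ Set.Ioo (-γ) 2) (hγ : 0 < γ) (hγβ : γ < β) (hβ : β ≤ 1) :
    CkHolderBound m (β - γ) (angularConst b β γ * (2 * M)) (angularFracLap b γ f) := by
  have hγ1 : γ ∈ Set.Ioo (0 : ℝ) 1 := ⟨hγ, hγβ.trans_le hβ⟩
  have hbound : ∀ i ≤ m, HolderBound β (2 * M) (iteratedDeriv i f) :=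
    fun i hi => hf.holderBound_iteratedDeriv (hγ.trans hγβ).le hβ hi
  have hchain := ckHolderBound_of_forall_hasDerivAt (m := m)
    (g := fun i => _root_.angularFracLap b γ (iteratedDeriv i f)) (sub_pos.2 hγβ)
    (fun i hi => hasDerivAt_angularFracLap (hbound i hi.le) (hbound (i + 1) hi)
      (hf.hasDerivAt_iteratedDeriv hi) hb hγ1 hγβ)
    (fun i hi => (hbound i hi).angularFracLap hb hγ1 hγβ)
  simpa only [iteratedDeriv_zero] using hchain

end AngularOperator

section Plane

lemma norm_circ (t : ℝ) : ‖circ t‖ = 1 := by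
  simp [circ, EuclideanSpace.norm_eq]

/-- The isometry `ℂ ≃ ℝ²` followed by the rotation of angle `t`, which takes `1` to `circ t`. -/
def planeRotation (t : ℝ) : ℂ ≃ₗᵢ[ℝ] E2 :=
  (rotation (Circle.exp t)).trans Complex.orthonormalBasisOneI.repr

lemma planeRotation_apply (t : ℝ) (z : ℂ) : planeRotation t z = ‖z‖ • circ (t + z.arg) := by
  have hpolar : (Circle.exp t : ℂ) * z = ‖z‖ * Complex.exp ((t + z.arg : ℝ) * Complex.I) := by
    conv_lhs => rw [← Complex.norm_mul_exp_arg_mul_I z]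
    rw [Circle.coe_exp, Complex.ofReal_add, add_mul, Complex.exp_add]
    ring
  rw [planeRotation, LinearIsometryEquiv.trans_apply, rotation_apply, hpolar]
  ext i
  rw [Complex.orthonormalBasisOneI_repr_apply]
  fin_cases i
  · simp [circ, -Complex.ofReal_add, Complex.exp_ofReal_mul_I_re]
  · simp [circ, -Complex.ofReal_add, Complex.exp_ofReal_mul_I_im]

variable (b γ : ℝ) (u : E2 → ℂ)

lemma homData_smul {r : ℝ} (hr : 0 < r) (x : E2) :
    homData b u (r • x) = ((r ^ (-b) : ℝ) : ℂ) * homData b u x := by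
  rw [homData, homData, norm_smul, Real.norm_of_nonneg hr.le,
    Real.mul_rpow hr.le (norm_nonneg x), smul_smul, mul_inv_rev, inv_mul_cancel_right₀ hr.ne',
    Complex.ofReal_mul, mul_assoc]

lemma homData_circ (t : ℝ) : homData b u (circ t) = u (circ t) := by
  simp [homData, norm_circ]

lemma fracHom_smul {r : ℝ} (hr : 0 < r) (x : E2) :
    fracHom b γ u (r • x) = ((r ^ (-b - γ) : ℝ) : ℂ) * fracHom b γ u x := by
  have hintegrand (y : E2) : (homData b u (r • x) - homData b u (r • y)) /
      ((‖r • x - r • y‖ ^ (2 + γ) : ℝ) : ℂ) = ((r ^ (-b - (2 + γ)) : ℝ) : ℂ) *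
      ((homData b u x - homData b u y) / ((‖x - y‖ ^ (2 + γ) : ℝ) : ℂ)) := by
    rw [homData_smul b u hr, homData_smul b u hr, ← smul_sub, norm_smul,
      Real.norm_of_nonneg hr.le, Real.mul_rpow hr.le (norm_nonneg _), Real.rpow_sub hr,
      Complex.ofReal_mul, Complex.ofReal_div, ← mul_sub, mul_div_mul_comm]
  have hscale := Measure.integral_comp_smul (volume : Measure E2) (fun y =>
    (homData b u (r • x) - homData b u y) / ((‖r • x - y‖ ^ (2 + γ) : ℝ) : ℂ)) r
  simp only [hintegrand, integral_const_mul, finrank_euclideanSpace_fin] at hscale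
  rw [abs_of_pos (by positivity), eq_inv_smul_iff₀ (by positivity), Complex.real_smul,
    ← mul_assoc, ← Complex.ofReal_mul, ← Real.rpow_natCast, ← Real.rpow_add hr] at hscale
  rw [fracHom, ← hscale, fracHom]
  congr 3
  push_cast
  ring

lemma fracHom_circ (t : ℝ) :
    fracHom b γ u (circ t) = angularFracLap b γ (fun t => u (circ t)) t := by
  have hone : planeRotation t 1 = circ t := by simp [planeRotation_apply]
  rw [fracHom, ← (planeRotation t).measurePreserving.integral_comp
    (planeRotation t).toHomeomorph.measurableEmbedding, angularFracLap]
  refine integral_congr_ae ?_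
  filter_upwards [Measure.ae_ne volume (0 : ℂ)] with z hz
  have hdist : ‖circ t - planeRotation t z‖ = ‖1 - z‖ := by
    rw [← hone, ← map_sub, LinearIsometryEquiv.norm_map]
  rw [hdist, planeRotation_apply, homData_smul b u (norm_pos_iff.2 hz), homData_circ,
    homData_circ, angularIntegrand, Complex.real_smul, Complex.real_smul,
    Real.rpow_neg (norm_nonneg (1 - z)), Complex.ofReal_inv, div_eq_inv_mul]

end Plane

theorem fracLap_homogeneous_general (β₀ β γ : ℝ) (m : ℕ)
    (hβ₀ : β₀ ∈ Set.Ioo (-γ) 2) (hβ1 : β ≤ 1) (hγ0 : 0 < γ) (hγβ : γ < β) :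
    ∃ C > 0, ∀ (ubar : E2 → ℂ) (M : ℝ),
      ContDiff ℝ (m : ℕ∞) (fun t => ubar (circ t)) →
      (∀ i ≤ m, ∀ t : ℝ, ‖iteratedDeriv i (fun t => ubar (circ t)) t‖ ≤ M) →
      (∀ t t' : ℝ, ‖iteratedDeriv m (fun t => ubar (circ t)) t
          - iteratedDeriv m (fun t => ubar (circ t)) t'‖ ≤ M * |t - t'| ^ β) →
      ∃ utilde : E2 → ℂ,
        (∀ x : E2, x ≠ 0 →
          fracHom β₀ γ ubar x = ((‖x‖ ^ (-β₀ - γ : ℝ) : ℝ) : ℂ) * utilde (‖x‖⁻¹ • x)) ∧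
        ContDiff ℝ (m : ℕ∞) (fun t => utilde (circ t)) ∧
        (∀ i ≤ m, ∀ t : ℝ, ‖iteratedDeriv i (fun t => utilde (circ t)) t‖ ≤ C * M) ∧
        (∀ t t' : ℝ, ‖iteratedDeriv m (fun t => utilde (circ t)) t
            - iteratedDeriv m (fun t => utilde (circ t)) t'‖ ≤ C * M * |t - t'| ^ (β - γ)) := by
  have hconst := angularConst_nonneg (b := β₀) (β := β) (γ := γ)
  refine ⟨2 * angularConst β₀ β γ + 1, by positivity, fun ubar M hsmooth hderiv hholder => ?_⟩
  have hubar : CkHolderBound m β M fun t => ubar (circ t) := ⟨hsmooth, hderiv, hholder⟩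
  have hutilde : CkHolderBound m (β - γ) ((2 * angularConst β₀ β γ + 1) * M)
      fun t => fracHom β₀ γ ubar (circ t) := by
    simp only [fracHom_circ]
    exact (hubar.angularFracLap hβ₀ hγ0 hγβ hβ1).mono (by linarith [hubar.nonneg])
  refine ⟨fracHom β₀ γ ubar, fun x hx => ?_, hutilde.contDiff, hutilde.norm_iteratedDeriv_le,
    hutilde.norm_iteratedDeriv_sub_le⟩
  have hx : 0 < ‖x‖ := norm_pos_iff.2 hx
  rw [← fracHom_smul β₀ γ ubar hx, smul_inv_smul₀ hx.ne']

/-- the fractional Laplacian of an `(−β₀)`-homogeneous datum with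
`C^{m,β}(𝕊¹)` angular part is `(−β₀−γ)`-homogeneous with `C^{m,β−γ}(𝕊¹)` angular part
`ũ_{0,γ}`, with `‖ũ_{0,γ}‖_{C^{m,β−γ}} ≤ C(m,β₀,β,γ) ‖ū₀‖_{C^{m,β}}`.
The `C^{m,β}` data is encoded through the circle parametrization `circ`. -/
theorem fracLap_homogeneous (β₀ β γ : ℝ) (m : ℕ)
    (hβ₀ : β₀ ∈ Set.Ioo (0:ℝ) 1) (hβ0 : 0 < β) (hβ1 : β ≤ 1) (hγ0 : 0 < γ) (hγβ : γ < β) :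
    ∃ C > 0, ∀ (ubar : E2 → ℂ) (M : ℝ),
      ContDiff ℝ (m : ℕ∞) (fun t => ubar (circ t)) →
      (∀ i ≤ m, ∀ t : ℝ, ‖iteratedDeriv i (fun t => ubar (circ t)) t‖ ≤ M) →
      (∀ t t' : ℝ, ‖iteratedDeriv m (fun t => ubar (circ t)) t
          - iteratedDeriv m (fun t => ubar (circ t)) t'‖ ≤ M * |t - t'| ^ β) →
      ∃ utilde : E2 → ℂ,
        (∀ x : E2, x ≠ 0 →
          fracHom β₀ γ ubar x = ((‖x‖ ^ (-β₀ - γ : ℝ) : ℝ) : ℂ) * utilde (‖x‖⁻¹ • x)) ∧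
        ContDiff ℝ (m : ℕ∞) (fun t => utilde (circ t)) ∧
        (∀ i ≤ m, ∀ t : ℝ, ‖iteratedDeriv i (fun t => utilde (circ t)) t‖ ≤ C * M) ∧
        (∀ t t' : ℝ, ‖iteratedDeriv m (fun t => utilde (circ t)) t
            - iteratedDeriv m (fun t => utilde (circ t)) t'‖ ≤ C * M * |t - t'| ^ (β - γ)) := by
  exact fracLap_homogeneous_general β₀ β γ m ⟨by linarith [hβ₀.1], by linarith [hβ₀.2]⟩
    hβ1 hγ0 hγβ
end
end
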